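/- Let n ≥ 4 be an integer. For every fixed ξ with 0 < ξ < ξ_m there exists a unique number c₀(ξ) with λ < c₀(ξ) < c₂(ξ) such that the solution m of the equation m''(x) + (x/2 − 2δ/x) m'(x) + (δ(δ+1)/x² − (δ/2 − ε)) m(x) = (1/x²)(2 μ₁(x) m(x)/x)^n with initial data m(ξ) = c₀(ξ), m'(ξ) = 0 is positive on (0,ξ] and satisfies lim_{x→0⁺} m(x) = λ. Furthermore, the function ξ ↦ c₀(ξ) is continuous on (0, ξ_m). -/

import Mathlib

noncomputable def kap : ℝ := 1 / Real.sqrt Real.pi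

noncomputable def eps (n : ℕ) : ℝ := 1 / ((n : ℝ) - 1)

noncomputable def del (n : ℕ) : ℝ := ((n : ℝ) + 2) / ((n : ℝ) - 1)

noncomputable def lam (n : ℕ) : ℝ :=
  (del n * (del n + 1) / (2 * kap) ^ n) ^ (1 / ((n : ℝ) - 1))

noncomputable def mu1 (y : ℝ) : ℝ :=
  (2 / Real.sqrt Real.pi) * ∫ σ in (0:ℝ)..(y / 2), Real.exp (-σ ^ 2)

/-- ξ₀ = √(δ(δ+1)/(nε/2)). -/
noncomputable def xi0 (n : ℕ) : ℝ :=
  Real.sqrt (del n * (del n + 1) / ((n : ℝ) * eps n / 2))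

/-- c₂(ξ) = ((nε/2)/(2μ₁(ξ)/ξ)ⁿ · (ξ₀² − ξ²))^ε. -/
noncomputable def c2 (n : ℕ) (ξ : ℝ) : ℝ :=
  (((n : ℝ) * eps n / 2) / (2 * mu1 ξ / ξ) ^ n * (xi0 n ^ 2 - ξ ^ 2)) ^ eps n

/-- ω₁(ξ) = (2μ₁(ξ)/ξ)ⁿ/ξ². -/
noncomputable def om1 (n : ℕ) (ξ : ℝ) : ℝ := (2 * mu1 ξ / ξ) ^ n / ξ ^ 2

/-- ω₂(ξ) = nε/2 − δ(δ+1)/ξ². -/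
noncomputable def om2 (n : ℕ) (ξ : ℝ) : ℝ :=
  (n : ℝ) * eps n / 2 - del n * (del n + 1) / ξ ^ 2

/-- m is a solution on (0,ξ] of the equation for m = y^δ μ₂ with initial data
m(ξ) = ρ, m'(ξ) = 0, positive on (0,ξ], and m(x) → λ as x → 0⁺. -/
def IsShootSol (n : ℕ) (ξ ρ : ℝ) (m : ℝ → ℝ) : Prop :=
  ContDiffOn ℝ 2 m (Set.Ioc 0 ξ) ∧
  (∀ x ∈ Set.Ioc (0:ℝ) ξ,
    derivWithin (derivWithin m (Set.Ioc 0 ξ)) (Set.Ioc 0 ξ) x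
        + (x / 2 - 2 * del n / x) * derivWithin m (Set.Ioc 0 ξ) x
        + (del n * (del n + 1) / x ^ 2 - (del n / 2 - eps n)) * m x
      = (1 / x ^ 2) * (2 * mu1 x * m x / x) ^ n) ∧
  m ξ = ρ ∧
  derivWithin m (Set.Ioc 0 ξ) ξ = 0 ∧
  (∀ x ∈ Set.Ioc (0:ℝ) ξ, 0 < m x) ∧
  Filter.Tendsto m (nhdsWithin 0 (Set.Ioi 0)) (nhds (lam n))

/-!
In the variable `t = log x` the equation becomes `m'' = (1 + 2δ - x² / 2) m' + R(x, m)`, where the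
reaction `R(x, m)` is negative for `0 < m < c₂(x)` and positive for `m > c₂(x)`. The nullcline `c₂`
increases on `(0, ξm)` and tends to `λ` at `0`: writing `2 μ₁(x) / x` as a moment generating
function in `x² / 4`, this follows from the convexity of the cumulant generating function.

Started at rest and followed towards `t = -∞`, a solution may fall below `λ` or rise above the
nullcline. Both are open conditions on the initial data, they exclude each other because each is
irreversible, and both occur; by connectedness some solution does neither. It decreases towards
`t = -∞`, and its limit is `λ` because above `λ` the force is bounded away from zero there.

Since `R(x, y) / y` is strictly increasing in `y`, the Wronskian of two positive solutions starting
from rest at different heights keeps its sign. Their ratio is then strictly monotone, so they cannot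
both tend to `λ ≠ 0`. The two open sets of initial data therefore lie exactly below and above the
graph of `c₀`, which makes `c₀` continuous.
-/

open Set Filter Topology MeasureTheory ProbabilityTheory
open scoped NNReal BoundedContinuousFunction

section RealFunctions

variable {f f' : ℝ → ℝ} {a b d : ℝ}

theorem eventually_lt_nhdsLT_of_hasDerivWithinAt_pos (h : HasDerivWithinAt f d (Iio b) b)
    (hd : 0 < d) : ∀ᶠ x in 𝓝[<] b, f x < f b := by
  have hslope := hasDerivWithinAt_iff_tendsto_slope' (self_notMem_Iio (a := b)) |>.1 h
  filter_upwards [hslope.eventually_const_lt hd, self_mem_nhdsWithin] with x hx hxb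
  rwa [slope_comm, slope_pos_iff_of_le (le_of_lt hxb)] at hx

theorem eventually_lt_nhdsGT_of_hasDerivWithinAt_pos (h : HasDerivWithinAt f d (Ioi a) a)
    (hd : 0 < d) : ∀ᶠ x in 𝓝[>] a, f a < f x := by
  have hslope := hasDerivWithinAt_iff_tendsto_slope' (self_notMem_Ioi (a := a)) |>.1 h
  filter_upwards [hslope.eventually_const_lt hd, self_mem_nhdsWithin] with x hx hxa
  rwa [slope_pos_iff_of_le (le_of_lt hxa)] at hx

theorem neg_of_eventually_neg_of_ne_zero (hf : ContinuousOn f (Ico a b))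
    (hev : ∀ᶠ t in 𝓝[<] b, f t < 0)
    (hne : ∀ s ∈ Ico a b, (∀ t ∈ Ioo s b, f t < 0) → f s ≠ 0) {t : ℝ} (ht : t ∈ Ico a b) :
    f t < 0 := by
  by_contra! hft
  obtain ⟨l, hl, hlneg⟩ := (mem_nhdsLT_iff_exists_mem_Ico_Ioo_subset ht.2).1 hev
  have hcont : ContinuousOn f (Icc t l) := hf.mono fun x hx => ⟨ht.1.trans hx.1, hx.2.trans_lt hl.2⟩
  have hcompact : IsCompact (Icc t l ∩ f ⁻¹' Ici 0) := isCompact_Icc.of_isClosed_subset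
    (hcont.preimage_isClosed_of_isClosed isClosed_Icc isClosed_Ici) inter_subset_left
  obtain ⟨s, ⟨hs, hfs⟩, hs_max⟩ := hcompact.exists_isGreatest ⟨t, left_mem_Icc.2 hl.1, hft⟩
  have hneg : ∀ x ∈ Ioo s b, f x < 0 := fun x hx => by
    by_contra! hfx
    have hxl : x ≤ l := not_lt.1 fun hlx => hfx.not_gt (hlneg ⟨hlx, hx.2⟩)
    exact hx.1.not_ge (hs_max ⟨⟨hs.1.trans hx.1.le, hxl⟩, hfx⟩)
  have hs_mem : s ∈ Ico a b := ⟨ht.1.trans hs.1, hs.2.trans_lt hl.2⟩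
  refine hne s hs_mem hneg (le_antisymm ?_ hfs)
  have hright : Tendsto f (𝓝[Ioo s b] s) (𝓝 (f s)) :=
    (hf s hs_mem).mono fun x hx => ⟨hs_mem.1.trans hx.1.le, hx.2⟩
  rw [nhdsWithin_Ioo_eq_nhdsGT hs_mem.2] at hright
  exact le_of_tendsto hright (by
    filter_upwards [Ioo_mem_nhdsGT hs_mem.2] with x hx using (hneg x hx).le)

theorem neg_of_eventually_neg_of_deriv_pos (hf : ContinuousOn f (Ico a b))
    (hev : ∀ᶠ t in 𝓝[<] b, f t < 0)
    (hderiv : ∀ s ∈ Ico a b, (∀ t ∈ Ioo s b, f t < 0) → f s = 0 →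
      ∃ d, 0 < d ∧ HasDerivWithinAt f d (Ioi s) s)
    {t : ℝ} (ht : t ∈ Ico a b) : f t < 0 := by
  refine neg_of_eventually_neg_of_ne_zero hf hev (fun s hs hneg hfs => ?_) ht
  obtain ⟨d, hd, hfd⟩ := hderiv s hs hneg hfs
  obtain ⟨x, hx, hxs⟩ :=
    ((eventually_lt_nhdsGT_of_hasDerivWithinAt_pos hfd hd).and (Ioo_mem_nhdsGT hs.2)).exists
  linarith [hneg x hxs]

theorem tendsto_atBot_atBot_of_const_le_deriv {q : ℝ} (hf : ∀ t, HasDerivAt f (f' t) t) (hq : 0 < q)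
    (hf' : ∀ᶠ t in atBot, q ≤ f' t) : Tendsto f atBot atBot := by
  obtain ⟨T, hT⟩ := eventually_atBot.1 hf'
  have hle : ∀ᶠ t in atBot, f t ≤ f T + q * (t - T) := by
    filter_upwards [eventually_le_atBot T] with t ht
    have := (convex_Iic T).mul_sub_le_image_sub_of_le_deriv
      (fun x _ => (hf x).continuousAt.continuousWithinAt)
      (fun x _ => (hf x).differentiableAt.differentiableWithinAt)
      (fun x hx => (hf x).deriv ▸ hT x (mem_Iic.1 (interior_subset hx))) t ht T self_mem_Iic ht
    linarith
  exact tendsto_atBot_mono' _ hle <| tendsto_atBot_add_const_left _ _ <|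
    (tendsto_atBot_add_const_right _ (-T) tendsto_id).const_mul_atBot hq

end RealFunctions

section LinearDamping

variable {m r a g : ℝ → ℝ} {t₀ t₁ : ℝ}

theorem neg_of_forcing_pos (hr : ∀ t, HasDerivAt r (a t * r t + g t) t)
    (ha : ∀ t < t₁, 0 ≤ a t) (hg : ∀ t ∈ Ioo t₀ t₁, 0 < g t) (hr₁ : r t₁ ≤ 0)
    {t : ℝ} (ht : t ∈ Ioo t₀ t₁) : r t < 0 := by
  have hr_cont : Continuous r := continuous_iff_continuousAt.2 fun t => (hr t).continuousAt
  by_contra! hrt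
  have hmem {x : ℝ} (hx : x ∈ Ico t t₁) : x ∈ Ioo t₀ t₁ := ⟨ht.1.trans_le hx.1, hx.2⟩
  have hr_nonneg : ∀ x ∈ Icc t t₁, 0 ≤ r x :=
    image_le_of_deriv_right_lt_deriv_boundary' (f := fun _ => (0 : ℝ)) (f' := fun _ => 0)
      continuousOn_const (fun x _ => hasDerivWithinAt_const ..) hrt hr_cont.continuousOn
      (fun x _ => (hr x).hasDerivWithinAt) fun x hx hrx => by
        simpa [← hrx] using hg x (hmem hx)
  have hr_mono : StrictMonoOn r (Icc t t₁) :=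
    strictMonoOn_of_deriv_pos (convex_Icc _ _) hr_cont.continuousOn fun x hx => by
      rw [interior_Icc] at hx
      rw [(hr x).deriv]
      exact add_pos_of_nonneg_of_pos (mul_nonneg (ha x hx.2) (hr_nonneg x (Ioo_subset_Icc_self hx)))
        (hg x (hmem (Ioo_subset_Ico_self hx)))
  linarith [hr_mono (left_mem_Icc.2 ht.2.le) (right_mem_Icc.2 ht.2.le) ht.2]

theorem eventually_neg_of_forcing_pos (hr : ∀ t, HasDerivAt r (a t * r t + g t) t)
    (ha : ∀ t < t₁, 0 ≤ a t) (hg : ∀ᶠ t in 𝓝[<] t₁, 0 < g t) (hr₁ : r t₁ ≤ 0) :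
    ∀ᶠ t in 𝓝[<] t₁, r t < 0 := by
  obtain ⟨t₀, ht₀, hsub⟩ := mem_nhdsLT_iff_exists_Ioo_subset.1 hg
  filter_upwards [Ioo_mem_nhdsLT ht₀] with t ht using neg_of_forcing_pos hr ha hsub hr₁ ht

theorem vel_neg_of_forcing_pos (hm : ∀ t, HasDerivAt m (r t) t)
    (hr : ∀ t, HasDerivAt r (a t * r t + g t) t) (ha : ∀ t < t₁, 0 ≤ a t) (hr₁ : r t₁ ≤ 0)
    (hev : ∀ᶠ t in 𝓝[<] t₁, 0 < g t) (hg : ∀ t < t₁, m t₁ < m t → 0 < g t)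
    {t : ℝ} (ht : t < t₁) : r t < 0 := by
  have hr_cont : Continuous r := continuous_iff_continuousAt.2 fun t => (hr t).continuousAt
  have hm_cont : Continuous m := continuous_iff_continuousAt.2 fun t => (hm t).continuousAt
  refine neg_of_eventually_neg_of_deriv_pos hr_cont.continuousOn
    (eventually_neg_of_forcing_pos hr ha hev hr₁) (fun s hs hneg hrs => ?_) (left_mem_Ico.2 ht)
  have hm_anti : StrictAntiOn m (Icc s t₁) := strictAntiOn_of_hasDerivWithinAt_neg (convex_Icc s t₁)
    hm_cont.continuousOn (fun x _ => (hm x).hasDerivWithinAt)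
    (by simpa only [interior_Icc] using hneg)
  have hms : m t₁ < m s := hm_anti (left_mem_Icc.2 hs.2.le) (right_mem_Icc.2 hs.2.le) hs.2
  exact ⟨_, by simpa [hrs] using hg s hs.2 hms, (hr s).hasDerivWithinAt⟩

end LinearDamping

section Thresholds

theorem continuousOn_of_isOpen_of_fiber_eq {X α : Type*} [TopologicalSpace X] [TopologicalSpace α]
    [LinearOrder α] [OrderTopology α] {A B : Set (X × α)} (hA : IsOpen A) (hB : IsOpen B)
    {U : Set X} {g : X → α} (hAg : ∀ x ∈ U, ∀ c, (x, c) ∈ A ↔ c < g x)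
    (hBg : ∀ x ∈ U, ∀ c, (x, c) ∈ B ↔ g x < c) : ContinuousOn g U := by
  intro x hx
  have hfiber {S : Set (X × α)} (hS : IsOpen S) {c : α} (hc : (x, c) ∈ S) :
      ∀ᶠ y in 𝓝[U] x, (y, c) ∈ S :=
    nhdsWithin_le_nhds ((hS.preimage (Continuous.prodMk_left c)).mem_nhds hc)
  refine tendsto_order.2 ⟨fun c hc => ?_, fun c hc => ?_⟩
  · filter_upwards [hfiber hA ((hAg x hx c).2 hc), self_mem_nhdsWithin] with y hy hyU
      using (hAg y hyU c).1 hy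
  · filter_upwards [hfiber hB ((hBg x hx c).2 hc), self_mem_nhdsWithin] with y hy hyU
      using (hBg y hyU c).1 hy

theorem mem_iff_lt_of_isOpen_of_notMem_union_iff {α : Type*} [TopologicalSpace α]
    [ConditionallyCompleteLinearOrder α] [OrderTopology α] [DenselyOrdered α] {A B : Set α}
    (hA : IsOpen A) (hB : IsOpen B) (hAB : Disjoint A B) {c₀ : α} (hc₀ : ∀ c, c ∉ A ∪ B ↔ c = c₀)
    {a b : α} (ha : a ∈ A) (hac : a < c₀) (hb : b ∈ B) (hbc : c₀ < b) (c : α) :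
    (c ∈ A ↔ c < c₀) ∧ (c ∈ B ↔ c₀ < c) := by
  have hmem {c : α} (hc : c ≠ c₀) : c ∈ A ∪ B := not_not.1 fun h => hc ((hc₀ c).1 h)
  have hIio : ∀ c < c₀, c ∈ A := fun c hc => (hmem hc.ne).resolve_right fun hcB => by
    obtain ⟨x, -, hxA, hxB⟩ := isPreconnected_Iio A B hA hB (fun x hx => hmem (ne_of_lt hx))
      ⟨a, hac, ha⟩ ⟨c, hc, hcB⟩
    exact hAB.le_bot ⟨hxA, hxB⟩
  have hIoi : ∀ c, c₀ < c → c ∈ B := fun c hc => (hmem hc.ne').resolve_left fun hcA => by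
    obtain ⟨x, -, hxA, hxB⟩ := isPreconnected_Ioi A B hA hB (fun x hx => hmem (ne_of_gt hx))
      ⟨c, hc, hcA⟩ ⟨b, hbc, hb⟩
    exact hAB.le_bot ⟨hxA, hxB⟩
  have hc₀' := (hc₀ c₀).2 rfl
  rcases lt_trichotomy c c₀ with hc | rfl | hc
  · exact ⟨iff_of_true (hIio c hc) hc, iff_of_false (hAB.notMem_of_mem_left (hIio c hc)) hc.not_gt⟩
  · exact ⟨iff_of_false (fun h => hc₀' (.inl h)) (lt_irrefl _),
      iff_of_false (fun h => hc₀' (.inr h)) (lt_irrefl _)⟩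
  · exact ⟨iff_of_false (hAB.notMem_of_mem_right (hIoi c hc)) hc.not_gt, iff_of_true (hIoi c hc) hc⟩

end Thresholds

section IntegralCurves

theorem abs_integral_exp_abs_le {c : ℝ} (hc : 0 < c) (x : ℝ) :
    |∫ u in (0 : ℝ)..x, Real.exp (c * |u|)| ≤ Real.exp (c * |x|) / c := by
  have of_nonneg {y : ℝ} (hy : 0 ≤ y) :
      |∫ u in (0 : ℝ)..y, Real.exp (c * |u|)| ≤ Real.exp (c * y) / c := by
    have hcongr : ∫ u in (0 : ℝ)..y, Real.exp (c * |u|) = ∫ u in (0 : ℝ)..y, Real.exp (c * u) :=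
      intervalIntegral.integral_congr fun u hu => by
        rw [uIcc_of_le hy] at hu
        simp only [abs_of_nonneg hu.1]
    rw [abs_of_nonneg (intervalIntegral.integral_nonneg hy fun u _ => (Real.exp_pos _).le), hcongr,
      intervalIntegral.integral_comp_mul_left _ hc.ne', integral_exp, mul_zero, Real.exp_zero,
      smul_eq_mul, inv_mul_eq_div]
    gcongr
    linarith
  rcases le_total 0 x with hx | hx
  · simpa only [abs_of_nonneg hx] using of_nonneg hx
  · have hneg := of_nonneg (neg_nonneg.2 hx)
    rw [intervalIntegral.integral_symm, abs_neg] at hneg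
    rw [abs_of_nonpos hx]
    convert hneg using 2
    simpa using (intervalIntegral.integral_comp_neg (a := 0) (b := x) fun u => Real.exp (c * |u|))

variable {E : Type*} [NormedAddCommGroup E] [NormedSpace ℝ E]

theorem norm_integral_le_exp_abs_integral {φ : ℝ → ℝ} (hφ : Continuous φ)
    {h : ℝ → E} {C t₀ : ℝ} (hC : 0 ≤ C)
    (hh : ∀ s, ‖h s‖ ≤ C * (Real.exp (2 * |∫ u in t₀..s, φ u|) * φ s)) (t : ℝ) :
    ‖∫ s in t₀..t, h s‖ ≤ C * (Real.exp (2 * |∫ u in t₀..t, φ u|) / 2) := by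
  have : Continuous fun s => ∫ u in t₀..s, φ u :=
    intervalIntegral.continuous_primitive (fun _ _ => hφ.intervalIntegrable _ _) t₀
  have hsubst : ∫ s in t₀..t, Real.exp (2 * |∫ u in t₀..s, φ u|) * φ s =
      ∫ w in (0 : ℝ)..∫ u in t₀..t, φ u, Real.exp (2 * |w|) := by
    have := intervalIntegral.integral_comp_mul_deriv (a := t₀) (b := t)
      (f := fun s => ∫ u in t₀..s, φ u) (g := fun w => Real.exp (2 * |w|))
      (fun s _ => hφ.integral_hasStrictDerivAt t₀ s |>.hasDerivAt) hφ.continuousOn (by fun_prop)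
    simpa using this
  calc ‖∫ s in t₀..t, h s‖
      ≤ |∫ s in t₀..t, C * (Real.exp (2 * |∫ u in t₀..s, φ u|) * φ s)| :=
        intervalIntegral.norm_integral_le_abs_of_norm_le (.of_forall hh)
          (Continuous.intervalIntegrable (by fun_prop) _ _)
    _ = C * |∫ w in (0 : ℝ)..∫ u in t₀..t, φ u, Real.exp (2 * |w|)| := by
        rw [intervalIntegral.integral_const_mul, hsubst, abs_mul, abs_of_nonneg hC]
    _ ≤ _ := by gcongr; exact abs_integral_exp_abs_le two_pos _

theorem exists_fixedPt_of_weighted_contraction [CompleteSpace E] {α : Type*} [TopologicalSpace α]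
    {T : C(α, E) → C(α, E)} {w : C(α, ℝ)} (hw : ∀ t, 0 < w t) {q : ℝ≥0} (hq : q < 1)
    (hT : ∀ γ η C, (∀ t, ‖γ t - η t‖ ≤ C * w t) → ∀ t, ‖T γ t - T η t‖ ≤ q * C * w t)
    {γ₀ : C(α, E)} {C₀ : ℝ} (h₀ : ∀ t, ‖T γ₀ t - γ₀ t‖ ≤ C₀ * w t) : ∃ γ, T γ = γ := by
  let lift (g : α →ᵇ E) : C(α, E) := γ₀ + w • g.toContinuousMap
  let unlift (γ : C(α, E)) : C(α, E) := ⟨fun t => (w t)⁻¹ • (γ t - γ₀ t),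
    (w.continuous.inv₀ fun t => (hw t).ne').smul (γ.continuous.sub γ₀.continuous)⟩
  have norm_w_inv_smul_le {t : α} {x : E} {C : ℝ} (h : ‖x‖ ≤ C * w t) : ‖(w t)⁻¹ • x‖ ≤ C := by
    rwa [norm_smul, norm_inv, Real.norm_of_nonneg (hw t).le, inv_mul_le_iff₀ (hw t), mul_comm]
  have norm_lift_sub (g₁ g₂ : α →ᵇ E) (t : α) : ‖lift g₁ t - lift g₂ t‖ ≤ dist g₁ g₂ * w t := by
    have heq : lift g₁ t - lift g₂ t = w t • (g₁ t - g₂ t) := by simp [lift, smul_sub]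
    rw [heq, norm_smul, Real.norm_of_nonneg (hw t).le, mul_comm, ← dist_eq_norm]
    gcongr
    exacts [(hw t).le, g₁.dist_coe_le_dist t]
  have hbound (g : α →ᵇ E) (t : α) : ‖unlift (T (lift g)) t‖ ≤ q * dist g 0 + C₀ := by
    refine norm_w_inv_smul_le ((norm_sub_le_norm_sub_add_norm_sub _ (T γ₀ t) _).trans ?_)
    have hzero : lift 0 = γ₀ := by ext t; simp [lift]
    have := hT (lift g) γ₀ _ (hzero ▸ norm_lift_sub g 0) t
    linarith [h₀ t]
  let S (g : α →ᵇ E) : α →ᵇ E :=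
    .ofNormedAddCommGroup _ (unlift (T (lift g))).continuous _ (hbound g)
  have hS : ContractingWith q S := by
    refine ⟨hq, .of_dist_le_mul fun g₁ g₂ =>
      (BoundedContinuousFunction.dist_le (by positivity)).2 fun t => ?_⟩
    have heq : S g₁ t - S g₂ t = (w t)⁻¹ • (T (lift g₁) t - T (lift g₂) t) := by
      simp [S, unlift, ← smul_sub]
    rw [dist_eq_norm, heq]
    exact norm_w_inv_smul_le (hT _ _ _ (norm_lift_sub g₁ g₂) t)
  refine ⟨lift (hS.fixedPoint S), ContinuousMap.ext fun t => ?_⟩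
  have hfix : unlift (T (lift (hS.fixedPoint S))) t = hS.fixedPoint S t :=
    congrArg (· t) hS.fixedPoint_isFixedPt.eq
  have hlift : lift (hS.fixedPoint S) t = γ₀ t + w t • hS.fixedPoint S t := rfl
  rw [hlift, ← hfix]
  simp [unlift, smul_inv_smul₀ (hw t).ne']

variable {v : ℝ → E → E} {K : ℝ → ℝ≥0}

/-- `ODE.picard` as a self-map of the space of continuous curves on the whole real line. -/
noncomputable def picardMap (hv : Continuous (Function.uncurry v)) (t₀ : ℝ) (x₀ : E)
    (γ : C(ℝ, E)) : C(ℝ, E) where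
  toFun := ODE.picard v t₀ x₀ γ
  continuous_toFun := continuous_const.add <| intervalIntegral.continuous_primitive
    (fun _ _ => (hv.comp (continuous_id.prodMk γ.continuous)).intervalIntegrable _ _) t₀

theorem picardMap_sub_apply (hv : Continuous (Function.uncurry v)) (t₀ : ℝ) (x₀ : E)
    (γ η : C(ℝ, E)) (t : ℝ) : picardMap hv t₀ x₀ γ t - picardMap hv t₀ x₀ η t =
      ∫ s in t₀..t, (v s (γ s) - v s (η s)) := by
  have hint (γ : C(ℝ, E)) : IntervalIntegrable (fun s => v s (γ s)) volume t₀ t :=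
    (hv.comp (continuous_id.prodMk γ.continuous)).intervalIntegrable _ _
  rw [intervalIntegral.integral_sub (hint γ) (hint η)]
  exact add_sub_add_left_eq_sub _ _ _

theorem isIntegralCurve_of_picardMap_eq [CompleteSpace E] {hv : Continuous (Function.uncurry v)}
    {t₀ : ℝ} {x₀ : E} {γ : C(ℝ, E)} (h : picardMap hv t₀ x₀ γ = γ) : IsIntegralCurve γ v := by
  intro t
  have hcont : Continuous fun s => v s (γ s) := hv.comp (continuous_id.prodMk γ.continuous)
  have hderiv : HasDerivAt (picardMap hv t₀ x₀ γ) (v t (γ t)) t :=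
    (hcont.integral_hasStrictDerivAt t₀ t).hasDerivAt.const_add x₀
  rwa [h] at hderiv

theorem exists_picardMap_eq [CompleteSpace E] (hv : Continuous (Function.uncurry v))
    (hK : Continuous K) (hvK : ∀ t, LipschitzWith (K t) (v t)) (t₀ : ℝ) (x₀ : E) :
    ∃ γ, picardMap hv t₀ x₀ γ = γ := by
  let φ (s : ℝ) : ℝ := K s + ‖v s x₀‖
  have hφ : Continuous φ := by
    have := hv.comp (Continuous.prodMk_left x₀)
    exact (NNReal.continuous_coe.comp hK).add this.norm
  let w : C(ℝ, ℝ) := ⟨fun t => Real.exp (2 * |∫ u in t₀..t, φ u|),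
    (continuous_const.mul (intervalIntegral.continuous_primitive
      (fun _ _ => hφ.intervalIntegrable _ _) t₀).abs).rexp⟩
  have hw_one (t : ℝ) : 1 ≤ w t := Real.one_le_exp (by positivity)
  have hw_pos (t : ℝ) : 0 < w t := one_pos.trans_le (hw_one t)
  refine exists_fixedPt_of_weighted_contraction hw_pos (q := 1 / 2) (γ₀ := .const ℝ x₀)
    (C₀ := 1 / 2) (by norm_num) (fun γ η C h t => ?_) fun t => ?_
  · have hC : 0 ≤ C := nonneg_of_mul_nonneg_left ((norm_nonneg _).trans (h t)) (hw_pos t)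
    rw [picardMap_sub_apply]
    refine (norm_integral_le_exp_abs_integral hφ hC (fun s => ?_) t).trans_eq ?_
    · calc _ ≤ K s * ‖γ s - η s‖ := (hvK s).norm_sub_le _ _
        _ ≤ φ s * (C * w s) := by
          gcongr
          exacts [by simp [φ], h s]
        _ = _ := by simp only [w, ContinuousMap.coe_mk]; ring
    · simp only [w, ContinuousMap.coe_mk]; push_cast; ring
  · have heq : picardMap hv t₀ x₀ (.const ℝ x₀) t - x₀ = ∫ s in t₀..t, v s x₀ :=
      add_sub_cancel_left _ _
    rw [ContinuousMap.const_apply, heq]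
    refine (norm_integral_le_exp_abs_integral hφ zero_le_one (fun s => ?_) t).trans_eq ?_
    · calc ‖v s x₀‖ ≤ 1 * (1 * φ s) := by simp [φ]
        _ ≤ _ := by gcongr; exact hw_one s
    · simp only [w, ContinuousMap.coe_mk]; ring

theorem exists_isIntegralCurve_of_lipschitzWith [CompleteSpace E]
    (hv : Continuous (Function.uncurry v)) (hK : Continuous K)
    (hvK : ∀ t, LipschitzWith (K t) (v t)) (t₀ : ℝ) (x₀ : E) :
    ∃ γ : ℝ → E, γ t₀ = x₀ ∧ IsIntegralCurve γ v := by
  obtain ⟨γ, hγ⟩ := exists_picardMap_eq hv hK hvK t₀ x₀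
  exact ⟨γ, hγ ▸ ODE.picard_apply₀, isIntegralCurve_of_picardMap_eq hγ⟩

theorem dist_le_mul_exp_of_isIntegralCurve {γ₁ γ₂ : ℝ → E} (h₁ : IsIntegralCurve γ₁ v)
    (h₂ : IsIntegralCurve γ₂ v) {C : ℝ≥0} {a b : ℝ} (hC : ∀ t ∈ uIcc a b, LipschitzWith C (v t)) :
    dist (γ₁ b) (γ₂ b) ≤ dist (γ₁ a) (γ₂ a) * Real.exp (C * |b - a|) := by
  rcases le_total a b with hab | hba
  · rw [uIcc_of_le hab] at hC
    rw [abs_of_nonneg (sub_nonneg.2 hab)]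
    exact dist_le_of_trajectories_ODE_of_mem (s := fun _ => univ)
      (fun t ht => (hC t (Ico_subset_Icc_self ht)).lipschitzOnWith)
      h₁.continuous.continuousOn (fun t _ => (h₁ t).hasDerivWithinAt) (fun _ _ => mem_univ _)
      h₂.continuous.continuousOn (fun t _ => (h₂ t).hasDerivWithinAt) (fun _ _ => mem_univ _)
      le_rfl b (right_mem_Icc.2 hab)
  · rw [uIcc_of_ge hba] at hC
    have h₁' := h₁.comp_mul (-1)
    have h₂' := h₂.comp_mul (-1)
    rw [abs_of_nonpos (sub_nonpos.2 hba), neg_sub, ← neg_sub_neg b]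
    simpa using dist_le_of_trajectories_ODE_of_mem (a := -a) (b := -b) (s := fun _ => univ)
      (fun t ht => by simpa using hC (-t) ⟨by linarith [ht.2], by linarith [ht.1]⟩)
      h₁'.continuous.continuousOn (fun t _ => (h₁' t).hasDerivWithinAt) (fun _ _ => mem_univ _)
      h₂'.continuous.continuousOn (fun t _ => (h₂' t).hasDerivWithinAt) (fun _ _ => mem_univ _)
      le_rfl (-b) (right_mem_Icc.2 (neg_le_neg hba))

theorem continuous_flow_apply {flow : ℝ × E → ℝ → E} (h₀ : ∀ p, flow p p.1 = p.2)
    (hflow : ∀ p, IsIntegralCurve (flow p) v) (hK : Continuous K)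
    (hvK : ∀ t, LipschitzWith (K t) (v t)) (t : ℝ) : Continuous fun p => flow p t := by
  refine continuous_iff_continuousAt.2 fun p => ?_
  set B := Metric.closedBall p.1 (max 1 |t - p.1|)
  obtain ⟨C, hC⟩ := ((isCompact_closedBall p.1 (max 1 |t - p.1|)).image hK).bddAbove
  have hdist : ∀ᶠ q : ℝ × E in 𝓝 p,
      dist (flow q t) (flow p t) ≤ dist q.2 (flow p q.1) * Real.exp (C * |t - q.1|) := by
    filter_upwards [continuous_fst.continuousAt.eventually (Metric.closedBall_mem_nhds p.1 one_pos)]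
      with q hq
    have hsub : uIcc q.1 t ⊆ B := (convex_closedBall p.1 _).ordConnected.uIcc_subset
      (Metric.closedBall_subset_closedBall (le_max_left _ _) hq) (le_max_right 1 |t - p.1|)
    simpa only [h₀ q] using dist_le_mul_exp_of_isIntegralCurve (hflow q) (hflow p) fun s hs =>
      (hvK s).weaken (hC (mem_image_of_mem K (hsub hs)))
  rw [ContinuousAt, tendsto_iff_dist_tendsto_zero]
  refine squeeze_zero' (.of_forall fun _ => dist_nonneg) hdist ?_
  have hbound : Continuous fun q : ℝ × E => dist q.2 (flow p q.1) * Real.exp (C * |t - q.1|) :=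
    (continuous_snd.dist ((hflow p).continuous.comp continuous_fst)).mul (by fun_prop)
  exact hbound.tendsto' p 0 (by simp [h₀])

end IntegralCurves

section Comparison

theorem contDiffOn_two_of_hasDerivWithinAt {𝕜 F : Type*} [NontriviallyNormedField 𝕜]
    [NormedAddCommGroup F] [NormedSpace 𝕜 F] {f f' f'' : 𝕜 → F} {s : Set 𝕜}
    (hs : UniqueDiffOn 𝕜 s) (hf : ∀ x ∈ s, HasDerivWithinAt f (f' x) s x)
    (hf' : ∀ x ∈ s, HasDerivWithinAt f' (f'' x) s x) (hcont : ContinuousOn f'' s) :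
    ContDiffOn 𝕜 2 f s := by
  have hderiv : EqOn (derivWithin f s) f' s := fun x hx => (hf x hx).derivWithin (hs x hx)
  have hderiv' : EqOn (derivWithin f' s) f'' s := fun x hx => (hf' x hx).derivWithin (hs x hx)
  refine (contDiffOn_succ_iff_derivWithin (n := 1) hs).2
    ⟨fun x hx => (hf x hx).differentiableWithinAt, by simp, ?_⟩
  refine ((contDiffOn_one_iff_derivWithin hs).2
    ⟨fun x hx => (hf' x hx).differentiableWithinAt, hcont.congr hderiv'⟩).congr hderiv

/-- `m` is a positive solution, with derivative `r`, of `m'' = p x * m' + F x m` on `(a, b]` that is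
at rest at the endpoint `b`. -/
structure IsPositiveSolution (p : ℝ → ℝ) (F : ℝ → ℝ → ℝ) (a b : ℝ) (m r : ℝ → ℝ) : Prop where
  hasDerivWithinAt : ∀ x ∈ Ioc a b, HasDerivWithinAt m (r x) (Ioc a b) x
  hasDerivWithinAt_deriv :
    ∀ x ∈ Ioc a b, HasDerivWithinAt r (p x * r x + F x (m x)) (Ioc a b) x
  pos : ∀ x ∈ Ioc a b, 0 < m x
  deriv_right_eq_zero : r b = 0

variable {m₁ m₂ r₁ r₂ p : ℝ → ℝ} {F : ℝ → ℝ → ℝ} {a b L : ℝ}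

theorem strictAntiOn_div_of_wronskian_neg {D : Set ℝ} (hD : Convex ℝ D)
    (h₁ : ∀ x ∈ D, HasDerivWithinAt m₁ (r₁ x) D x) (h₂ : ∀ x ∈ D, HasDerivWithinAt m₂ (r₂ x) D x)
    (hne : ∀ x ∈ D, m₂ x ≠ 0) (hW : ∀ x ∈ interior D, r₁ x * m₂ x - m₁ x * r₂ x < 0) :
    StrictAntiOn (fun x => m₁ x / m₂ x) D := by
  have hderiv := fun x hx => (h₁ x hx).fun_div (h₂ x hx) (hne x hx)
  exact strictAntiOn_of_hasDerivWithinAt_neg hD (fun x hx => (hderiv x hx).continuousWithinAt)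
    (fun x hx => (hderiv x (interior_subset hx)).mono interior_subset)
    fun x hx => div_neg_of_neg_of_pos (hW x hx) (sq_pos_of_ne_zero (hne x (interior_subset hx)))

namespace IsPositiveSolution

theorem contDiffOn (h : IsPositiveSolution p F a b m₁ r₁) (hp : ContinuousOn p (Ioc a b))
    (hF : ContinuousOn (Function.uncurry F) (Ioc a b ×ˢ univ)) : ContDiffOn ℝ 2 m₁ (Ioc a b) := by
  have hm : ContinuousOn m₁ (Ioc a b) := fun x hx => (h.hasDerivWithinAt x hx).continuousWithinAt
  have hr : ContinuousOn r₁ (Ioc a b) := fun x hx =>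
    (h.hasDerivWithinAt_deriv x hx).continuousWithinAt
  exact contDiffOn_two_of_hasDerivWithinAt (uniqueDiffOn_Ioc a b) h.hasDerivWithinAt
    h.hasDerivWithinAt_deriv ((hp.mul hr).add
      (hF.comp (continuousOn_id.prodMk hm) fun x hx => ⟨hx, mem_univ _⟩))

theorem hasDerivWithinAt_wronskian (h₁ : IsPositiveSolution p F a b m₁ r₁)
    (h₂ : IsPositiveSolution p F a b m₂ r₂) {x : ℝ} (hx : x ∈ Ioc a b) :
    HasDerivWithinAt (fun x => r₁ x * m₂ x - m₁ x * r₂ x)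
      (p x * (r₁ x * m₂ x - m₁ x * r₂ x) + (F x (m₁ x) * m₂ x - F x (m₂ x) * m₁ x)) (Ioc a b) x :=
  (((h₁.hasDerivWithinAt_deriv x hx).fun_mul (h₂.hasDerivWithinAt x hx)).fun_sub
    ((h₁.hasDerivWithinAt x hx).fun_mul (h₂.hasDerivWithinAt_deriv x hx))).congr_deriv (by ring)

theorem wronskian_neg (hF : ∀ x ∈ Ioc a b, StrictMonoOn (fun y => F x y / y) (Ioi 0))
    (h₁ : IsPositiveSolution p F a b m₁ r₁) (h₂ : IsPositiveSolution p F a b m₂ r₂)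
    (hb : m₂ b < m₁ b) {x : ℝ} (hx : x ∈ Ioo a b) : r₁ x * m₂ x - m₁ x * r₂ x < 0 := by
  have hab := hx.1.trans hx.2
  have hcross {y : ℝ} (hy : y ∈ Ioc a b) (hlt : m₂ y < m₁ y) :
      0 < F y (m₁ y) * m₂ y - F y (m₂ y) * m₁ y :=
    sub_pos.2 ((div_lt_div_iff₀ (h₂.pos y hy) (h₁.pos y hy)).1
      (hF y hy (h₂.pos y hy) (h₁.pos y hy) hlt))
  have hsub {y : ℝ} (hy : y ∈ Ico x b) : Icc y b ⊆ Ioc a b :=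
    Icc_subset_Ioc (hx.1.trans_le hy.1) le_rfl
  have hmem {y : ℝ} (hy : y ∈ Ico x b) : y ∈ Ioc a b := hsub hy (left_mem_Icc.2 hy.2.le)
  refine neg_of_eventually_neg_of_deriv_pos (f := fun x => r₁ x * m₂ x - m₁ x * r₂ x)
    (fun y hy => (h₁.hasDerivWithinAt_wronskian h₂ (hmem hy)).continuousWithinAt.mono
      fun z hz => hmem hz) ?_ (fun s hs hneg hWs => ?_) (left_mem_Ico.2 hx.2)
  · have hderiv := (h₁.hasDerivWithinAt_wronskian h₂ (right_mem_Ioc.2 hab)).mono_of_mem_nhdsWithin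
      (s := Iio b) (mem_of_superset (Ioo_mem_nhdsLT hab) Ioo_subset_Ioc_self)
    simpa [h₁.deriv_right_eq_zero, h₂.deriv_right_eq_zero] using
      eventually_lt_nhdsLT_of_hasDerivWithinAt_pos hderiv
        (by simpa [h₁.deriv_right_eq_zero, h₂.deriv_right_eq_zero] using
          hcross (right_mem_Ioc.2 hab) hb)
  · have hanti : StrictAntiOn (fun x => m₁ x / m₂ x) (Icc s b) :=
      strictAntiOn_div_of_wronskian_neg (convex_Icc s b)
        (fun y hy => (h₁.hasDerivWithinAt y (hsub hs hy)).mono (hsub hs))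
        (fun y hy => (h₂.hasDerivWithinAt y (hsub hs hy)).mono (hsub hs))
        (fun y hy => (h₂.pos y (hsub hs hy)).ne') (by simpa only [interior_Icc] using hneg)
    have hlt : m₂ s < m₁ s := (one_lt_div (h₂.pos s (hmem hs))).1 <|
      ((one_lt_div (h₂.pos b (right_mem_Ioc.2 hab))).2 hb).trans
        (hanti (left_mem_Icc.2 hs.2.le) (right_mem_Icc.2 hs.2.le) hs.2)
    refine ⟨_, ?_, (h₁.hasDerivWithinAt_wronskian h₂ (hmem hs)).mono_of_mem_nhdsWithin
      (mem_of_superset (Ioo_mem_nhdsGT hs.2) (Ioo_subset_Icc_self.trans (hsub hs)))⟩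
    simpa [hWs] using hcross (hmem hs) hlt

theorem right_le_of_tendsto (hF : ∀ x ∈ Ioc a b, StrictMonoOn (fun y => F x y / y) (Ioi 0))
    (h₁ : IsPositiveSolution p F a b m₁ r₁) (h₂ : IsPositiveSolution p F a b m₂ r₂) (hab : a < b)
    (hL : L ≠ 0) (hlim₁ : Tendsto m₁ (𝓝[>] a) (𝓝 L)) (hlim₂ : Tendsto m₂ (𝓝[>] a) (𝓝 L)) :
    m₁ b ≤ m₂ b := by
  by_contra! hlt
  have hb : b ∈ Ioc a b := right_mem_Ioc.2 hab
  have hanti : StrictAntiOn (fun x => m₁ x / m₂ x) (Ioc a b) :=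
    strictAntiOn_div_of_wronskian_neg (convex_Ioc a b) h₁.hasDerivWithinAt h₂.hasDerivWithinAt
      (fun x hx => (h₂.pos x hx).ne') (by
        rw [interior_Ioc]
        exact fun x hx => wronskian_neg hF h₁ h₂ hlt hx)
  have hratio : m₁ b / m₂ b ≤ L / L := ge_of_tendsto (hlim₁.div hlim₂ hL) <| by
    filter_upwards [Ioc_mem_nhdsGT hab] with x hx using hanti.antitoneOn hx hb hx.2
  rw [div_self hL] at hratio
  exact hratio.not_gt ((one_lt_div (h₂.pos b hb)).2 hlt)

theorem right_eq_of_tendsto (hF : ∀ x ∈ Ioc a b, StrictMonoOn (fun y => F x y / y) (Ioi 0))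
    (h₁ : IsPositiveSolution p F a b m₁ r₁) (h₂ : IsPositiveSolution p F a b m₂ r₂) (hab : a < b)
    (hL : L ≠ 0) (hlim₁ : Tendsto m₁ (𝓝[>] a) (𝓝 L)) (hlim₂ : Tendsto m₂ (𝓝[>] a) (𝓝 L)) :
    m₁ b = m₂ b :=
  (right_le_of_tendsto hF h₁ h₂ hab hL hlim₁ hlim₂).antisymm
    (right_le_of_tendsto hF h₂ h₁ hab hL hlim₂ hlim₁)

end IsPositiveSolution

end Comparison

/-- The scalar equation `m'' = drift t * m' + force t m`, to be integrated backwards from a turning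
point at time `t₀ < endTime`. The force pushes away from the increasing curve `nullcline`, which
stays above `target`, and near `t = -∞` nothing above `target` can remain at rest. -/
structure ShootingProblem where
  endTime : ℝ
  target : ℝ
  drift : ℝ → ℝ
  force : ℝ → ℝ → ℝ
  nullcline : ℝ → ℝ
  lipConst : ℝ → ℝ≥0
  continuous_drift : Continuous drift
  continuous_force : Continuous (Function.uncurry force)
  continuous_lipConst : Continuous lipConst
  lipschitzWith_force : ∀ t, LipschitzWith (lipConst t) (force t)
  drift_nonneg : ∀ t < endTime, 0 ≤ drift t
  force_pos : ∀ t < endTime, ∀ x, nullcline t < x → 0 < force t x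
  force_neg : ∀ t < endTime, ∀ x, x < nullcline t → force t x < 0
  target_lt_nullcline : ∀ t < endTime, target < nullcline t
  hasDerivAt_nullcline : ∀ t < endTime, ∃ d, 0 < d ∧ HasDerivAt nullcline d t
  exists_le_force : ∀ c, target < c → ∃ q, 0 < q ∧ ∀ᶠ t in atBot, ∀ x, c ≤ x → q ≤ force t x

namespace ShootingProblem

variable (P : ShootingProblem)

/-- The planar vector field of the first order system for `(m, m')`. -/
def field (t : ℝ) (y : ℝ × ℝ) : ℝ × ℝ := (y.2, P.drift t * y.2 + P.force t y.1)

theorem continuous_field : Continuous (Function.uncurry P.field) :=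
  continuous_snd.snd.prodMk (((P.continuous_drift.comp continuous_fst).mul continuous_snd.snd).add
    (P.continuous_force.comp (continuous_fst.prodMk continuous_snd.fst)))

theorem lipschitzWith_field (t : ℝ) :
    LipschitzWith (max 1 (‖P.drift t‖₊ * 1 + P.lipConst t * 1)) (P.field t) :=
  LipschitzWith.prod_snd.prodMk
    (((lipschitzWith_smul (P.drift t)).comp LipschitzWith.prod_snd).add
      ((P.lipschitzWith_force t).comp LipschitzWith.prod_fst))

theorem continuous_field_lipConst :
    Continuous fun t => max 1 (‖P.drift t‖₊ * 1 + P.lipConst t * 1) := by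
  have := P.continuous_drift
  have := P.continuous_lipConst
  fun_prop

theorem exists_flow (p : ℝ × ℝ × ℝ) : ∃ γ : ℝ → ℝ × ℝ, γ p.1 = p.2 ∧ IsIntegralCurve γ P.field :=
  exists_isIntegralCurve_of_lipschitzWith P.continuous_field P.continuous_field_lipConst
    P.lipschitzWith_field p.1 p.2

/-- The solution of the first order system with value `p.2` at time `p.1`. -/
noncomputable def flow (p : ℝ × ℝ × ℝ) : ℝ → ℝ × ℝ := (P.exists_flow p).choose

/-- The solution `m` with `m t₀ = c` and `m' t₀ = 0`. -/
noncomputable def pos (t₀ c t : ℝ) : ℝ := (P.flow (t₀, c, 0) t).1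

/-- The derivative `m'` of the solution `m` with `m t₀ = c` and `m' t₀ = 0`. -/
noncomputable def vel (t₀ c t : ℝ) : ℝ := (P.flow (t₀, c, 0) t).2

/-- The solution falls below `target` while moving down, backwards in time. -/
def Undershoots (t₀ c : ℝ) : Prop := ∃ t < t₀, P.pos t₀ c t < P.target ∧ 0 < P.vel t₀ c t

/-- The solution rises above the nullcline while moving up, backwards in time. -/
def Overshoots (t₀ c : ℝ) : Prop := ∃ t < t₀, P.nullcline t < P.pos t₀ c t ∧ P.vel t₀ c t < 0

/-- The solution moves down, backwards in time, without ever crossing `target`. -/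
def Trapped (t₀ c : ℝ) : Prop := ∀ t < t₀, P.target ≤ P.pos t₀ c t ∧ 0 < P.vel t₀ c t

variable {P} {t₀ t₁ c t : ℝ}

theorem flow_self (p : ℝ × ℝ × ℝ) : P.flow p p.1 = p.2 := (P.exists_flow p).choose_spec.1

theorem isIntegralCurve_flow (p : ℝ × ℝ × ℝ) : IsIntegralCurve (P.flow p) P.field :=
  (P.exists_flow p).choose_spec.2

@[simp] theorem pos_self (t₀ c : ℝ) : P.pos t₀ c t₀ = c := congrArg Prod.fst (flow_self (t₀, c, 0))

@[simp] theorem vel_self (t₀ c : ℝ) : P.vel t₀ c t₀ = 0 := congrArg Prod.snd (flow_self (t₀, c, 0))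

theorem hasDerivAt_pos (t₀ c t : ℝ) : HasDerivAt (P.pos t₀ c) (P.vel t₀ c t) t :=
  (isIntegralCurve_flow (t₀, c, 0) t).fst

theorem hasDerivAt_vel (t₀ c t : ℝ) : HasDerivAt (P.vel t₀ c)
    (P.drift t * P.vel t₀ c t + P.force t (P.pos t₀ c t)) t :=
  (isIntegralCurve_flow (t₀, c, 0) t).snd

theorem continuous_pos (t₀ c : ℝ) : Continuous (P.pos t₀ c) :=
  continuous_iff_continuousAt.2 fun t => (hasDerivAt_pos t₀ c t).continuousAt

theorem continuous_vel (t₀ c : ℝ) : Continuous (P.vel t₀ c) :=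
  continuous_iff_continuousAt.2 fun t => (hasDerivAt_vel t₀ c t).continuousAt

theorem continuous_flow_turningPoint (t : ℝ) :
    Continuous fun p : ℝ × ℝ => P.flow (p.1, p.2, 0) t :=
  (continuous_flow_apply flow_self isIntegralCurve_flow P.continuous_field_lipConst
    P.lipschitzWith_field t).comp (by fun_prop)

theorem isOpen_undershoots : IsOpen {p : ℝ × ℝ | P.Undershoots p.1 p.2} := by
  simp only [Undershoots, pos, vel, ofPred_exists, ofPred_and]
  refine isOpen_iUnion fun t => (isOpen_lt continuous_const continuous_fst).inter (.inter ?_ ?_)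
  exacts [isOpen_lt (continuous_flow_turningPoint t).fst continuous_const,
    isOpen_lt continuous_const (continuous_flow_turningPoint t).snd]

theorem isOpen_overshoots : IsOpen {p : ℝ × ℝ | P.Overshoots p.1 p.2} := by
  simp only [Overshoots, pos, vel, ofPred_exists, ofPred_and]
  refine isOpen_iUnion fun t => (isOpen_lt continuous_const continuous_fst).inter (.inter ?_ ?_)
  exacts [isOpen_lt continuous_const (continuous_flow_turningPoint t).fst,
    isOpen_lt (continuous_flow_turningPoint t).snd continuous_const]

theorem strictMonoOn_nullcline : StrictMonoOn P.nullcline (Iio P.endTime) := by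
  choose! d hd hderiv using P.hasDerivAt_nullcline
  exact strictMonoOn_of_hasDerivWithinAt_pos (f' := d) (convex_Iio _)
    (fun t ht => (hderiv t ht).continuousAt.continuousWithinAt)
    (fun t ht => (hderiv t (mem_Iio.1 (interior_subset ht))).hasDerivWithinAt)
    fun t ht => hd t (mem_Iio.1 (interior_subset ht))

theorem pos_lt_pos_of_vel_neg (hneg : ∀ s ∈ Ioo t t₁, P.vel t₀ c s < 0) (ht : t < t₁) :
    P.pos t₀ c t₁ < P.pos t₀ c t :=
  strictAntiOn_of_hasDerivWithinAt_neg (convex_Icc t t₁) (continuous_pos t₀ c).continuousOn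
    (fun s _ => (hasDerivAt_pos t₀ c s).hasDerivWithinAt) (by simpa only [interior_Icc] using hneg)
    (left_mem_Icc.2 ht.le) (right_mem_Icc.2 ht.le) ht

theorem pos_lt_pos_of_vel_pos (hpos : ∀ s ∈ Ioo t t₁, 0 < P.vel t₀ c s) (ht : t < t₁) :
    P.pos t₀ c t < P.pos t₀ c t₁ :=
  strictMonoOn_of_hasDerivWithinAt_pos (convex_Icc t t₁) (continuous_pos t₀ c).continuousOn
    (fun s _ => (hasDerivAt_pos t₀ c s).hasDerivWithinAt) (by simpa only [interior_Icc] using hpos)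
    (left_mem_Icc.2 ht.le) (right_mem_Icc.2 ht.le) ht

theorem eventually_force_pos (ht₁ : t₁ < P.endTime) (hm : P.nullcline t₁ ≤ P.pos t₀ c t₁)
    (hr : P.vel t₀ c t₁ ≤ 0) : ∀ᶠ t in 𝓝[<] t₁, 0 < P.force t (P.pos t₀ c t) := by
  obtain ⟨d, hd, hderiv⟩ := P.hasDerivAt_nullcline t₁ ht₁
  have hgap := eventually_lt_nhdsLT_of_hasDerivWithinAt_pos
    (hderiv.sub (hasDerivAt_pos t₀ c t₁)).hasDerivWithinAt (by linarith)
  filter_upwards [hgap, self_mem_nhdsWithin] with t ht htt₁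
  refine P.force_pos t (htt₁.trans ht₁) _ ?_
  simp only [Pi.sub_apply] at ht
  linarith

theorem eventually_force_neg (ht₁ : t₁ < P.endTime) (hm : P.pos t₀ c t₁ < P.nullcline t₁) :
    ∀ᶠ t in 𝓝[<] t₁, P.force t (P.pos t₀ c t) < 0 := by
  obtain ⟨d, -, hderiv⟩ := P.hasDerivAt_nullcline t₁ ht₁
  filter_upwards [nhdsWithin_le_nhds
    ((continuous_pos t₀ c).continuousAt.eventually_lt hderiv.continuousAt hm), self_mem_nhdsWithin]
    with t ht htt₁ using P.force_neg t (lt_trans htt₁ ht₁) _ ht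

theorem hasDerivAt_neg_vel (t₀ c t : ℝ) : HasDerivAt (fun t => -P.vel t₀ c t)
    (P.drift t * -P.vel t₀ c t + -P.force t (P.pos t₀ c t)) t :=
  (hasDerivAt_vel t₀ c t).fun_neg.congr_deriv (by ring)

theorem vel_neg_of_nullcline_le_pos (ht₁ : t₁ < P.endTime)
    (hm : P.nullcline t₁ ≤ P.pos t₀ c t₁) (hr : P.vel t₀ c t₁ ≤ 0) (ht : t < t₁) :
    P.vel t₀ c t < 0 :=
  vel_neg_of_forcing_pos (hasDerivAt_pos t₀ c) (hasDerivAt_vel t₀ c)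
    (fun s hs => P.drift_nonneg s (hs.trans ht₁)) hr (eventually_force_pos ht₁ hm hr)
    (fun s hs hms => P.force_pos s (hs.trans ht₁) _
      ((strictMonoOn_nullcline (hs.trans ht₁) ht₁ hs).trans_le hm |>.trans hms)) ht

theorem vel_pos_of_pos_le_target (ht₁ : t₁ < P.endTime) (hm : P.pos t₀ c t₁ ≤ P.target)
    (hr : 0 ≤ P.vel t₀ c t₁) (ht : t < t₁) : 0 < P.vel t₀ c t := by
  have hev := eventually_force_neg ht₁ (hm.trans_lt (P.target_lt_nullcline t₁ ht₁))
  refine neg_neg_iff_pos.1 <| vel_neg_of_forcing_pos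
    (fun s => (hasDerivAt_pos t₀ c s).fun_neg) (hasDerivAt_neg_vel t₀ c)
    (fun s hs => P.drift_nonneg s (hs.trans ht₁)) (neg_nonpos.2 hr) (by simpa using hev)
    (fun s hs hms => neg_pos.2 <| P.force_neg s (hs.trans ht₁) _ ?_) ht
  linarith [P.target_lt_nullcline s (hs.trans ht₁)]

theorem overshoots_of_nullcline_le_pos (ht₀ : t₀ < P.endTime) (ht₁ : t₁ ≤ t₀)
    (hm : P.nullcline t₁ ≤ P.pos t₀ c t₁) (hr : P.vel t₀ c t₁ ≤ 0) : P.Overshoots t₀ c := by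
  have ht₁' := ht₁.trans_lt ht₀
  obtain ⟨t, ht⟩ := exists_lt t₁
  have hneg {s : ℝ} (hs : s < t₁) := vel_neg_of_nullcline_le_pos ht₁' hm hr hs
  exact ⟨t, ht.trans_le ht₁, (strictMonoOn_nullcline (ht.trans ht₁') ht₁' ht).trans_le hm |>.trans
    (pos_lt_pos_of_vel_neg (fun s hs => hneg hs.2) ht), hneg ht⟩

theorem undershoots_of_pos_le_target (ht₀ : t₀ < P.endTime) (ht₁ : t₁ ≤ t₀)
    (hm : P.pos t₀ c t₁ ≤ P.target) (hr : 0 ≤ P.vel t₀ c t₁) : P.Undershoots t₀ c := by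
  obtain ⟨t, ht⟩ := exists_lt t₁
  have hpos {s : ℝ} (hs : s < t₁) := vel_pos_of_pos_le_target (ht₁.trans_lt ht₀) hm hr hs
  exact ⟨t, ht.trans_le ht₁, (pos_lt_pos_of_vel_pos (fun s hs => hpos hs.2) ht).trans_le hm,
    hpos ht⟩

theorem Undershoots.not_overshoots (ht₀ : t₀ < P.endTime) (h : P.Undershoots t₀ c) :
    ¬P.Overshoots t₀ c := by
  rintro ⟨s, hs, hms, hrs⟩
  obtain ⟨t, ht, hmt, hrt⟩ := h
  obtain ⟨τ, hτ⟩ := exists_lt (min s t)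
  obtain ⟨hτs, hτt⟩ := lt_min_iff.1 hτ
  have hpos := vel_pos_of_pos_le_target (ht.trans ht₀) hmt.le hrt.le hτt
  have hneg := vel_neg_of_nullcline_le_pos (hs.trans ht₀) hms.le hrs.le hτs
  exact hneg.not_gt hpos

theorem vel_pos_of_not_overshoots (ht₀ : t₀ < P.endTime) (hover : ¬P.Overshoots t₀ c)
    (ht : t < t₀) : 0 < P.vel t₀ c t := by
  have hbelow {s : ℝ} (hs : s ≤ t₀) (hrs : P.vel t₀ c s = 0) : P.pos t₀ c s < P.nullcline s :=
    not_le.1 fun hm => hover (overshoots_of_nullcline_le_pos ht₀ hs hm hrs.le)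
  have hev : ∀ᶠ s in 𝓝[<] t₀, -P.vel t₀ c s < 0 :=
    eventually_neg_of_forcing_pos (hasDerivAt_neg_vel t₀ c)
      (fun s hs => P.drift_nonneg s (hs.trans ht₀))
      (by simpa using eventually_force_neg ht₀ (hbelow le_rfl (vel_self t₀ c))) (by simp)
  refine neg_neg_iff_pos.1 <| neg_of_eventually_neg_of_deriv_pos
    (continuous_vel t₀ c).neg.continuousOn hev (fun s hs _ hrs => ?_) (left_mem_Ico.2 ht)
  refine ⟨_, ?_, (hasDerivAt_neg_vel t₀ c s).hasDerivWithinAt⟩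
  simpa [neg_eq_zero.1 hrs] using
    P.force_neg s (hs.2.trans ht₀) _ (hbelow hs.2.le (neg_eq_zero.1 hrs))

theorem trapped_iff_not_undershoots_and_not_overshoots (ht₀ : t₀ < P.endTime) :
    P.Trapped t₀ c ↔ ¬P.Undershoots t₀ c ∧ ¬P.Overshoots t₀ c := by
  refine ⟨fun h => ⟨?_, ?_⟩, fun ⟨hunder, hover⟩ t ht => ?_⟩
  · rintro ⟨t, ht, hm, -⟩
    exact hm.not_ge (h t ht).1
  · rintro ⟨t, ht, -, hr⟩
    exact hr.not_gt (h t ht).2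
  · have hr := vel_pos_of_not_overshoots ht₀ hover ht
    exact ⟨not_lt.1 fun hm => hunder ⟨t, ht, hm, hr⟩, hr⟩

namespace Trapped

theorem pos_lt_pos (h : P.Trapped t₀ c) (ht : t < t₁) (ht₁ : t₁ ≤ t₀) :
    P.pos t₀ c t < P.pos t₀ c t₁ :=
  pos_lt_pos_of_vel_pos (fun s hs => (h s (hs.2.trans_le ht₁)).2) ht

theorem target_lt (h : P.Trapped t₀ c) : P.target < c := by
  obtain ⟨t, ht⟩ := exists_lt t₀
  simpa using (h t ht).1.trans_lt (h.pos_lt_pos ht le_rfl)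

theorem lt_nullcline (ht₀ : t₀ < P.endTime) (h : P.Trapped t₀ c) : c < P.nullcline t₀ :=
  not_le.1 fun hc => ((trapped_iff_not_undershoots_and_not_overshoots ht₀).1 h).2
    (overshoots_of_nullcline_le_pos ht₀ le_rfl (by simpa using hc) (vel_self t₀ c).le)

theorem pos_mem_Icc (ht₀ : t₀ < P.endTime) (h : P.Trapped t₀ c) (ht : t ≤ t₀) :
    P.pos t₀ c t ∈ Icc P.target (P.nullcline t₀) := by
  obtain rfl | ht := ht.eq_or_lt
  · exact (pos_self t c).symm ▸ ⟨h.target_lt.le, (h.lt_nullcline ht₀).le⟩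
  · exact ⟨(h t ht).1, (h.pos_lt_pos ht le_rfl).le.trans
      ((pos_self t₀ c).trans_lt (h.lt_nullcline ht₀)).le⟩

theorem tendsto_pos (ht₀ : t₀ < P.endTime) (h : P.Trapped t₀ c) :
    Tendsto (P.pos t₀ c) atBot (𝓝 P.target) := by
  have hge : ∀ᶠ t in atBot, P.target ≤ P.pos t₀ c t := by
    filter_upwards [eventually_lt_atBot t₀] with t ht using (h t ht).1
  refine tendsto_order.2 ⟨fun l hl => hge.mono fun t ht => hl.trans_le ht, fun l hl => ?_⟩
  by_contra hfreq
  have hl_le : ∀ t < t₀, l ≤ P.pos t₀ c t := fun t ht => not_lt.1 fun hlt =>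
    hfreq ((eventually_lt_atBot t).mono fun s hs => (h.pos_lt_pos hs ht.le).trans hlt)
  obtain ⟨q, hq, hforce⟩ := P.exists_le_force l hl
  have haccel : ∀ᶠ t in atBot, q ≤ P.drift t * P.vel t₀ c t + P.force t (P.pos t₀ c t) := by
    filter_upwards [hforce, eventually_lt_atBot t₀] with t hqt ht
    have := mul_nonneg (P.drift_nonneg t (ht.trans ht₀)) (h t ht).2.le
    linarith [hqt _ (hl_le t ht)]
  have hvel := tendsto_atBot_atBot_of_const_le_deriv (hasDerivAt_vel t₀ c) hq haccel
  obtain ⟨t, hneg, ht⟩ := ((hvel.eventually_lt_atBot 0).and (eventually_lt_atBot t₀)).exists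
  exact hneg.not_gt (h t ht).2

end Trapped

theorem undershoots_target (ht₀ : t₀ < P.endTime) : P.Undershoots t₀ P.target :=
  undershoots_of_pos_le_target ht₀ le_rfl (pos_self ..).le (vel_self ..).ge

theorem overshoots_nullcline (ht₀ : t₀ < P.endTime) : P.Overshoots t₀ (P.nullcline t₀) :=
  overshoots_of_nullcline_le_pos ht₀ le_rfl (pos_self ..).ge (vel_self ..).le

theorem exists_trapped (ht₀ : t₀ < P.endTime) : ∃ c, P.Trapped t₀ c := by
  by_contra! hnone
  obtain ⟨c, -, hunder, hover⟩ := isPreconnected_univ _ _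
    (isOpen_undershoots.preimage (Continuous.prodMk_right t₀))
    (isOpen_overshoots.preimage (Continuous.prodMk_right t₀))
    (fun c _ => or_iff_not_imp_left.2 fun hunder => not_not.1 fun hover =>
      hnone c ((trapped_iff_not_undershoots_and_not_overshoots ht₀).2 ⟨hunder, hover⟩))
    ⟨_, mem_univ _, undershoots_target ht₀⟩ ⟨_, mem_univ _, overshoots_nullcline ht₀⟩
  exact hunder.not_overshoots ht₀ hover

theorem exists_continuousOn_trapped_iff
    (hunique : ∀ t₀ < P.endTime, ∀ c₁ c₂, P.Trapped t₀ c₁ → P.Trapped t₀ c₂ → c₁ = c₂) :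
    ∃ c₀ : ℝ → ℝ, ContinuousOn c₀ (Iio P.endTime) ∧
      ∀ t₀ < P.endTime, ∀ c, P.Trapped t₀ c ↔ c = c₀ t₀ := by
  choose! c₀ hc₀ using fun t₀ (ht₀ : t₀ < P.endTime) => exists_trapped ht₀
  have hiff : ∀ t₀ < P.endTime, ∀ c, P.Trapped t₀ c ↔ c = c₀ t₀ := fun t₀ ht₀ c =>
    ⟨fun h => hunique t₀ ht₀ _ _ h (hc₀ t₀ ht₀), fun h => h ▸ hc₀ t₀ ht₀⟩
  have hsides : ∀ t₀ < P.endTime, ∀ c,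
      (P.Undershoots t₀ c ↔ c < c₀ t₀) ∧ (P.Overshoots t₀ c ↔ c₀ t₀ < c) := fun t₀ ht₀ =>
    mem_iff_lt_of_isOpen_of_notMem_union_iff
      (isOpen_undershoots.preimage (Continuous.prodMk_right t₀))
      (isOpen_overshoots.preimage (Continuous.prodMk_right t₀))
      (disjoint_left.2 fun c hunder => hunder.not_overshoots ht₀)
      (fun c => not_or.trans
        ((trapped_iff_not_undershoots_and_not_overshoots ht₀).symm.trans (hiff t₀ ht₀ c)))
      (undershoots_target ht₀) (hc₀ t₀ ht₀).target_lt
      (overshoots_nullcline ht₀) ((hc₀ t₀ ht₀).lt_nullcline ht₀)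
  exact ⟨c₀, continuousOn_of_isOpen_of_fiber_eq isOpen_undershoots isOpen_overshoots
    (fun t₀ ht₀ c => (hsides t₀ ht₀ c).1) (fun t₀ ht₀ c => (hsides t₀ ht₀ c).2), hiff⟩

end ShootingProblem

section CumulantGeneratingFunction

variable {Ω : Type*} {mΩ : MeasurableSpace Ω} {μ : Measure Ω} {X : Ω → ℝ} {t : ℝ}

theorem hasDerivAt_mgf_mul_deriv_cgf (ht : t ∈ interior (integrableExpSet X μ))
    (hmgf : mgf X μ t ≠ 0) : HasDerivAt (mgf X μ) (mgf X μ t * deriv (cgf X μ) t) t :=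
  (hasDerivAt_mgf ht).congr_deriv (by rw [deriv_cgf ht, mul_div_cancel₀ _ hmgf])

theorem monotoneOn_deriv_cgf : MonotoneOn (deriv (cgf X μ)) (interior (integrableExpSet X μ)) := by
  have hdiff : DifferentiableOn ℝ (deriv (cgf X μ)) (interior (integrableExpSet X μ)) :=
    analyticOnNhd_cgf.deriv.differentiableOn
  refine monotoneOn_of_deriv_nonneg convex_integrableExpSet.interior hdiff.continuousOn
    (hdiff.mono interior_subset) fun t ht => ?_
  have hvar := variance_tilted_mul (interior_subset ht)
  rw [iteratedDeriv_succ, iteratedDeriv_one] at hvar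
  exact hvar ▸ variance_nonneg _ _

variable {a b : ℝ} [IsFiniteMeasure μ]

theorem integrableExpSet_eq_univ_of_mem_Icc (hX : AEMeasurable X μ) (h : ∀ᵐ ω ∂μ, X ω ∈ Icc a b) :
    integrableExpSet X μ = univ :=
  eq_univ_of_forall fun _ => integrable_exp_mul_of_mem_Icc hX h

theorem le_deriv_cgf_of_mem_Icc [NeZero μ] (hX : AEMeasurable X μ) (h : ∀ᵐ ω ∂μ, X ω ∈ Icc a b) :
    a ≤ deriv (cgf X μ) t := by
  have hset := integrableExpSet_eq_univ_of_mem_Icc hX h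
  have hprob := isProbabilityMeasure_tilted (integrable_exp_mul_of_mem_Icc (t := t) hX h)
  have htilted : ∀ᵐ ω ∂μ.tilted fun ω => t * X ω, X ω ∈ Icc a b := tilted_absolutelyContinuous _ _ h
  rw [← integral_tilted_mul_self (by simp [hset])]
  calc a = ∫ _, a ∂μ.tilted fun ω => t * X ω := by simp
    _ ≤ _ := integral_mono_ae (integrable_const _)
      (.of_mem_Icc a b (hX.mono_ac (tilted_absolutelyContinuous _ _)) htilted)
      (htilted.mono fun ω hω => hω.1)

end CumulantGeneratingFunction

section ErfRatio

/-- The random variable `-u²` on the unit interval, whose moment generating function at `x² / 4` is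
the mean of `exp (-(x * u / 2)²)`. -/
def negSq (u : unitInterval) : ℝ := -(u : ℝ) ^ 2

/-- The continuous extension of `2 * μ₁(x) / x` to `x = 0`. -/
noncomputable def erfRatio (x : ℝ) : ℝ := 2 * kap * mgf negSq volume (x ^ 2 / 4)

/-- The mean of `u²` under the weight `exp (-(x * u / 2)²)` on the unit interval; up to the factor
`-x / 2` it is the logarithmic derivative of `erfRatio`. -/
noncomputable def gaussMeanSq (x : ℝ) : ℝ := -deriv (cgf negSq volume) (x ^ 2 / 4)

theorem aemeasurable_negSq : AEMeasurable negSq volume :=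
  Continuous.aemeasurable (by unfold negSq; fun_prop)

theorem negSq_mem_Icc (u : unitInterval) : negSq u ∈ Icc (-1 : ℝ) 0 :=
  ⟨neg_le_neg (pow_le_one₀ u.2.1 u.2.2), neg_nonpos.2 (sq_nonneg _)⟩

theorem integrableExpSet_negSq : integrableExpSet negSq volume = univ :=
  integrableExpSet_eq_univ_of_mem_Icc aemeasurable_negSq (.of_forall negSq_mem_Icc)

theorem mgf_negSq_pos (z : ℝ) : 0 < mgf negSq volume z :=
  mgf_pos (integrableExpSet_negSq.ge (mem_univ z))

theorem mgf_negSq_eq_integral (z : ℝ) :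
    mgf negSq volume z = ∫ u in (0 : ℝ)..1, Real.exp (-(z * u ^ 2)) := by
  rw [intervalIntegral.integral_of_le zero_le_one, ← integral_Icc_eq_integral_Ioc,
    ← integral_subtype measurableSet_Icc]
  simp only [mgf, negSq, mul_neg]

theorem kap_pos : 0 < kap := one_div_pos.2 (Real.sqrt_pos.2 Real.pi_pos)

theorem erfRatio_pos (x : ℝ) : 0 < erfRatio x := mul_pos (mul_pos two_pos kap_pos) (mgf_negSq_pos _)

theorem erfRatio_zero : erfRatio 0 = 2 * kap := by simp [erfRatio]

theorem erfRatio_eq {x : ℝ} (hx : x ≠ 0) : erfRatio x = 2 * mu1 x / x := by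
  have hsubst : (x / 2) * ∫ u in (0 : ℝ)..1, Real.exp (-(x ^ 2 / 4 * u ^ 2)) =
      ∫ σ in (0 : ℝ)..x / 2, Real.exp (-σ ^ 2) := by
    have := intervalIntegral.mul_integral_comp_mul_left (a := 0) (b := 1)
      (f := fun σ => Real.exp (-σ ^ 2)) (c := x / 2)
    rw [mul_zero, mul_one] at this
    rw [← this]
    congr! 4
    ring_nf
  rw [erfRatio, mu1, kap, mgf_negSq_eq_integral, ← hsubst]
  field_simp

theorem hasDerivAt_erfRatio (x : ℝ) :
    HasDerivAt erfRatio (-(x / 2 * gaussMeanSq x * erfRatio x)) x := by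
  have hsq : HasDerivAt (fun x : ℝ => x ^ 2 / 4) (x / 2) x :=
    ((hasDerivAt_pow 2 x).div_const 4).congr_deriv (by norm_num; ring)
  have hmgf := hasDerivAt_mgf_mul_deriv_cgf (X := negSq) (t := x ^ 2 / 4)
    (by simp [integrableExpSet_negSq]) (mgf_negSq_pos _).ne'
  exact ((hmgf.comp x hsq).const_mul (2 * kap)).congr_deriv (by rw [gaussMeanSq, erfRatio]; ring)

theorem continuous_erfRatio : Continuous erfRatio :=
  continuous_iff_continuousAt.2 fun x => (hasDerivAt_erfRatio x).continuousAt

theorem antitoneOn_gaussMeanSq : AntitoneOn gaussMeanSq (Ici 0) := fun x hx y _ hxy =>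
  neg_le_neg <| monotoneOn_deriv_cgf (by simp [integrableExpSet_negSq])
    (by simp [integrableExpSet_negSq]) (by gcongr)

theorem gaussMeanSq_le_one (x : ℝ) : gaussMeanSq x ≤ 1 :=
  neg_le.1 (le_deriv_cgf_of_mem_Icc aemeasurable_negSq (.of_forall negSq_mem_Icc))

end ErfRatio

section Parameters

variable {n : ℕ}

theorem eps_eq_inv_natCast (hn : 1 ≤ n) : eps n = ((n - 1 : ℕ) : ℝ)⁻¹ := by
  rw [eps, Nat.cast_pred hn, one_div]

theorem eps_pos (hn : 2 ≤ n) : 0 < eps n := by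
  rw [eps_eq_inv_natCast (one_le_two.trans hn), inv_pos, Nat.cast_pos]
  lia

theorem del_pos (hn : 2 ≤ n) : 0 < del n :=
  div_pos (by positivity) (sub_pos.2 (Nat.one_lt_cast.2 hn))

theorem half_mul_eps_pos (hn : 2 ≤ n) : 0 < (n : ℝ) * eps n / 2 := by
  have := eps_pos hn
  positivity

theorem del_half_sub_eps (hn : n ≠ 1) : del n / 2 - eps n = n * eps n / 2 := by
  have : (n : ℝ) - 1 ≠ 0 := sub_ne_zero.2 (Nat.cast_ne_one.2 hn)
  rw [del, eps]
  field_simp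
  ring

theorem xi0_pos (hn : 2 ≤ n) : 0 < xi0 n := by
  have := del_pos hn
  have := half_mul_eps_pos hn
  exact Real.sqrt_pos.2 (by positivity)

theorem half_mul_eps_mul_xi0_sq (hn : 2 ≤ n) :
    (n : ℝ) * eps n / 2 * xi0 n ^ 2 = del n * (del n + 1) := by
  have := del_pos hn
  have := half_mul_eps_pos hn
  rw [xi0, Real.sq_sqrt (by positivity), mul_div_cancel₀ _ (by positivity)]

theorem rpow_eps_pow {a : ℝ} (hn : 2 ≤ n) (ha : 0 ≤ a) : (a ^ eps n) ^ (n - 1) = a := by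
  rw [eps_eq_inv_natCast (one_le_two.trans hn), Real.rpow_inv_natCast_pow ha (by lia)]

theorem lam_pos (hn : 2 ≤ n) : 0 < lam n := by
  have := del_pos hn
  have := kap_pos
  exact Real.rpow_pos_of_pos (by positivity) _

end Parameters

section Nullcline

variable {n : ℕ} {x : ℝ}

/-- The continuous extension of `c₂` to `x = 0`, where its value is `λ`. -/
noncomputable def c2Ext (n : ℕ) (x : ℝ) : ℝ :=
  ((n * eps n / 2) / erfRatio x ^ n * (xi0 n ^ 2 - x ^ 2)) ^ eps n

theorem c2Ext_of_ne_zero (hx : x ≠ 0) : c2Ext n x = c2 n x := by rw [c2Ext, c2, erfRatio_eq hx]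

theorem c2Ext_zero (hn : 2 ≤ n) : c2Ext n 0 = lam n := by
  rw [c2Ext, lam, erfRatio_zero, ← half_mul_eps_mul_xi0_sq hn, eps]
  ring_nf

theorem c2Ext_base_pos (hn : 2 ≤ n) (hx : x ^ 2 < xi0 n ^ 2) :
    0 < (n * eps n / 2) / erfRatio x ^ n * (xi0 n ^ 2 - x ^ 2) :=
  mul_pos (div_pos (half_mul_eps_pos hn) (pow_pos (erfRatio_pos x) n)) (sub_pos.2 hx)

theorem erfRatio_pow_mul_c2Ext_pow (hn : 2 ≤ n) (hx : x ^ 2 < xi0 n ^ 2) :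
    erfRatio x ^ n * c2Ext n x ^ (n - 1) = del n * (del n + 1) - n * eps n / 2 * x ^ 2 := by
  have := (erfRatio_pos x).ne'
  rw [c2Ext, rpow_eps_pow hn (c2Ext_base_pos hn hx).le, ← half_mul_eps_mul_xi0_sq hn]
  field_simp

theorem hasDerivAt_erfRatio_pow (n : ℕ) (x : ℝ) : HasDerivAt (fun x => erfRatio x ^ n)
    (-(n * (x / 2) * gaussMeanSq x * erfRatio x ^ n)) x := by
  refine ((hasDerivAt_erfRatio x).fun_pow n).congr_deriv ?_
  cases n with
  | zero => simp
  | succ n => rw [Nat.add_sub_cancel]; ring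

theorem exists_hasDerivAt_c2Ext (hn : 2 ≤ n) (hx : x ^ 2 < xi0 n ^ 2) : ∃ d, 0 < d ∧
    HasDerivAt (c2Ext n) (d * (x * (n * (xi0 n ^ 2 - x ^ 2) * gaussMeanSq x - 4))) x := by
  have hbase := c2Ext_base_pos hn hx
  have hE := erfRatio_pos x
  have hderiv : HasDerivAt (fun x => (n * eps n / 2) / erfRatio x ^ n * (xi0 n ^ 2 - x ^ 2))
      ((n * eps n / 4) / erfRatio x ^ n *
        (x * (n * (xi0 n ^ 2 - x ^ 2) * gaussMeanSq x - 4))) x := by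
    refine (((hasDerivAt_const x (n * eps n / 2)).fun_div (hasDerivAt_erfRatio_pow n x)
      (by positivity)).fun_mul ((hasDerivAt_pow 2 x).const_sub (xi0 n ^ 2))).congr_deriv ?_
    field_simp
    ring
  refine ⟨(n * eps n / 4) / erfRatio x ^ n * eps n *
    ((n * eps n / 2) / erfRatio x ^ n * (xi0 n ^ 2 - x ^ 2)) ^ (eps n - 1), ?_,
    (hderiv.rpow_const (.inl hbase.ne')).congr_deriv (by ring)⟩
  have := half_mul_eps_pos hn
  have := eps_pos hn
  have := Real.rpow_pos_of_pos hbase (eps n - 1)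
  positivity

/-- `ξm` is the critical point of `c₂`; the equation says that the derivative in
`exists_hasDerivAt_c2Ext` vanishes. -/
structure IsCritical (n : ℕ) (ξm : ℝ) : Prop where
  two_le : 2 ≤ n
  mem_Ioo : ξm ∈ Ioo 0 (xi0 n)
  eq_four : n * (xi0 n ^ 2 - ξm ^ 2) * gaussMeanSq ξm = 4

namespace IsCritical

variable {ξm : ℝ}

theorem of_deriv_om (hn : 2 ≤ n) (hξm : ξm ∈ Ioo 0 (xi0 n))
    (hchar : deriv (om1 n) ξm * c2 n ξm ^ (n - 1) + deriv (om2 n) ξm = 0) : IsCritical n ξm := by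
  have h0 : ξm ≠ 0 := hξm.1.ne'
  have hsq : ξm ^ 2 < xi0 n ^ 2 := pow_lt_pow_left₀ hξm.2 hξm.1.le two_ne_zero
  have hom1 : om1 n =ᶠ[𝓝 ξm] fun x => erfRatio x ^ n / x ^ 2 := by
    filter_upwards [isOpen_ne.mem_nhds h0] with x hx
    rw [om1, erfRatio_eq hx]
  have hderiv1 := ((hasDerivAt_erfRatio_pow n ξm).fun_div (hasDerivAt_pow 2 ξm)
    (pow_ne_zero 2 h0)).congr_of_eventuallyEq hom1
  have hderiv2 : HasDerivAt (om2 n) _ ξm := ((hasDerivAt_const ξm (del n * (del n + 1))).fun_div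
    (hasDerivAt_pow 2 ξm) (pow_ne_zero 2 h0)).const_sub (n * eps n / 2)
  rw [hderiv1.deriv, hderiv2.deriv, ← c2Ext_of_ne_zero h0] at hchar
  have hnull := erfRatio_pow_mul_c2Ext_pow hn hsq
  rw [← half_mul_eps_mul_xi0_sq hn] at hchar hnull
  refine ⟨hn, hξm, ?_⟩
  have hb := (half_mul_eps_pos hn).ne'
  generalize (n : ℝ) * eps n / 2 = b at hb hchar hnull
  field_simp at hchar
  refine mul_left_cancel₀ (mul_ne_zero hb (pow_ne_zero 3 h0)) ?_
  push_cast at hchar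
  linear_combination (-(n * ξm ^ 3 * gaussMeanSq ξm) - 4 * ξm) * hnull - hchar

theorem sq_lt_xi0_sq (h : IsCritical n ξm) (hx : x ∈ Icc 0 ξm) : x ^ 2 < xi0 n ^ 2 :=
  pow_lt_pow_left₀ (hx.2.trans_lt h.mem_Ioo.2) hx.1 two_ne_zero

theorem four_lt (h : IsCritical n ξm) (hx : x ∈ Ico 0 ξm) :
    4 < n * (xi0 n ^ 2 - x ^ 2) * gaussMeanSq x := by
  have hn : (0 : ℝ) < n := Nat.cast_pos.2 (two_pos.trans_le h.two_le)
  have hfactor {y : ℝ} (hy : y ∈ Icc 0 ξm) : 0 < n * (xi0 n ^ 2 - y ^ 2) :=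
    mul_pos hn (sub_pos.2 (h.sq_lt_xi0_sq hy))
  have hq : 0 < gaussMeanSq ξm := pos_of_mul_pos_right (h.eq_four ▸ four_pos)
    (hfactor (right_mem_Icc.2 h.mem_Ioo.1.le)).le
  calc 4 = n * (xi0 n ^ 2 - ξm ^ 2) * gaussMeanSq ξm := h.eq_four.symm
    _ < n * (xi0 n ^ 2 - x ^ 2) * gaussMeanSq ξm := by gcongr; exacts [hx.1, hx.2]
    _ ≤ n * (xi0 n ^ 2 - x ^ 2) * gaussMeanSq x :=
      mul_le_mul_of_nonneg_left (antitoneOn_gaussMeanSq hx.1 h.mem_Ioo.1.le hx.2.le)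
        (hfactor (Ico_subset_Icc_self hx)).le

theorem exists_pos_hasDerivAt_c2Ext (h : IsCritical n ξm) (hx : x ∈ Ioo 0 ξm) :
    ∃ d, 0 < d ∧ HasDerivAt (c2Ext n) d x := by
  obtain ⟨d, hd, hderiv⟩ :=
    exists_hasDerivAt_c2Ext h.two_le (h.sq_lt_xi0_sq (Ioo_subset_Icc_self hx))
  exact ⟨_, mul_pos hd (mul_pos hx.1 (sub_pos.2 (h.four_lt (Ioo_subset_Ico_self hx)))), hderiv⟩

theorem strictMonoOn_c2Ext (h : IsCritical n ξm) : StrictMonoOn (c2Ext n) (Icc 0 ξm) := by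
  choose! d hd hderiv using fun x (hx : x ∈ Ioo 0 ξm) => h.exists_pos_hasDerivAt_c2Ext hx
  refine strictMonoOn_of_hasDerivWithinAt_pos (f' := d) (convex_Icc 0 ξm) (fun x hx => ?_) ?_ ?_
  · obtain ⟨_, -, hx'⟩ := exists_hasDerivAt_c2Ext h.two_le (h.sq_lt_xi0_sq hx)
    exact hx'.continuousAt.continuousWithinAt
  · rw [interior_Icc]
    exact fun x hx => (hderiv x hx).hasDerivWithinAt
  · rwa [interior_Icc]

theorem lam_lt_c2Ext (h : IsCritical n ξm) (hx : x ∈ Ioc 0 ξm) : lam n < c2Ext n x :=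
  c2Ext_zero h.two_le ▸ h.strictMonoOn_c2Ext (left_mem_Icc.2 h.mem_Ioo.1.le)
    (Ioc_subset_Icc_self hx) hx.1

theorem sq_half_le (h : IsCritical n ξm) : ξm ^ 2 / 2 ≤ 1 + 2 * del n := by
  have hn : (2 : ℝ) ≤ n := mod_cast h.two_le
  have hn1 : (n : ℝ) - 1 ≠ 0 := by linarith
  have hb := half_mul_eps_pos h.two_le
  have := eps_pos h.two_le
  have hgap : 4 ≤ n * (xi0 n ^ 2 - ξm ^ 2) := h.eq_four ▸ mul_le_of_le_one_right
    (mul_nonneg n.cast_nonneg (sub_nonneg.2 (h.sq_lt_xi0_sq (right_mem_Icc.2 h.mem_Ioo.1.le)).le))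
    (gaussMeanSq_le_one ξm)
  have hident : n * eps n / 2 * (2 * (1 + 2 * del n)) - (del n * (del n + 1) - 2 * eps n) =
      (n ^ 2 - 4) * eps n ^ 2 := by
    rw [del, eps]
    field_simp
    ring
  have hle : n * eps n / 2 * ξm ^ 2 ≤ n * eps n / 2 * (2 * (1 + 2 * del n)) :=
    calc n * eps n / 2 * ξm ^ 2
        = n * eps n / 2 * xi0 n ^ 2 - eps n / 2 * (n * (xi0 n ^ 2 - ξm ^ 2)) := by ring
      _ ≤ del n * (del n + 1) - 2 * eps n := by
        rw [half_mul_eps_mul_xi0_sq h.two_le]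
        nlinarith
      _ ≤ _ := sub_nonneg.1 (hident ▸ mul_nonneg (by nlinarith) (sq_nonneg _))
  linarith [le_of_mul_le_mul_left hle hb]

end IsCritical

end Nullcline

section Reaction

/-- The zeroth order part of the equation for `m`: in the variable `t = log x` that equation reads
`m'' = (1 + 2δ - x² / 2) m' + reaction n x m`. -/
noncomputable def reaction (n : ℕ) (x y : ℝ) : ℝ :=
  erfRatio x ^ n * y ^ n - (del n * (del n + 1) - n * eps n / 2 * x ^ 2) * y

variable {n : ℕ} {x y ℓ M : ℝ}

theorem reaction_eq_mul (hn : 2 ≤ n) (hx : x ^ 2 < xi0 n ^ 2) :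
    reaction n x y = erfRatio x ^ n * y * (y ^ (n - 1) - c2Ext n x ^ (n - 1)) := by
  rw [reaction, ← erfRatio_pow_mul_c2Ext_pow hn hx, ← mul_pow_sub_one (by lia : n ≠ 0) y]
  ring

theorem reaction_pos (hn : 2 ≤ n) (hx : x ^ 2 < xi0 n ^ 2) (hy : c2Ext n x < y) :
    0 < reaction n x y := by
  have hc : 0 < c2Ext n x := Real.rpow_pos_of_pos (c2Ext_base_pos hn hx) _
  rw [reaction_eq_mul hn hx]
  exact mul_pos (mul_pos (pow_pos (erfRatio_pos x) n) (hc.trans hy))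
    (sub_pos.2 (pow_lt_pow_left₀ hy hc.le (by lia)))

theorem reaction_neg (hn : 2 ≤ n) (hx : x ^ 2 < xi0 n ^ 2) (hy₀ : 0 < y) (hy : y < c2Ext n x) :
    reaction n x y < 0 := by
  rw [reaction_eq_mul hn hx]
  exact mul_neg_of_pos_of_neg (mul_pos (pow_pos (erfRatio_pos x) n) hy₀)
    (sub_neg.2 (pow_lt_pow_left₀ hy hy₀.le (by lia)))

theorem strictMonoOn_reaction_div (hn : 2 ≤ n) (x : ℝ) :
    StrictMonoOn (fun y => reaction n x y / y) (Ioi 0) := by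
  have heq {y : ℝ} (hy : 0 < y) : reaction n x y / y =
      erfRatio x ^ n * y ^ (n - 1) - (del n * (del n + 1) - n * eps n / 2 * x ^ 2) := by
    rw [reaction, ← mul_pow_sub_one (by lia : n ≠ 0) y]
    field_simp
  intro y₁ hy₁ y₂ hy₂ hlt
  have := pow_pos (erfRatio_pos x) n
  have := pow_lt_pow_left₀ hlt (le_of_lt hy₁) (by lia : n - 1 ≠ 0)
  simp only [heq hy₁, heq hy₂]
  gcongr

theorem continuous_reaction (n : ℕ) : Continuous fun p : ℝ × ℝ => reaction n p.1 p.2 := by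
  have := continuous_erfRatio.comp (continuous_fst (X := ℝ) (Y := ℝ))
  unfold reaction
  fun_prop

theorem lipschitzOnWith_reaction (n : ℕ) (x : ℝ) (hℓ : 0 ≤ ℓ) :
    LipschitzOnWith (‖erfRatio x ^ n‖₊ * (n * ‖M‖₊ ^ (n - 1)) +
      ‖del n * (del n + 1) - n * eps n / 2 * x ^ 2‖₊) (reaction n x) (Icc ℓ M) := by
  have hpow : LipschitzOnWith (n * ‖M‖₊ ^ (n - 1)) (fun y : ℝ => y ^ n) (Icc ℓ M) := by
    refine LipschitzOnWith.of_dist_le_mul fun y hy z hz => (abs_pow_sub_pow_le y z n).trans ?_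
    have hmax : max |y| |z| ≤ |M| := max_le (abs_le_abs_of_nonneg (hℓ.trans hy.1) hy.2)
      (abs_le_abs_of_nonneg (hℓ.trans hz.1) hz.2)
    calc |y - z| * n * max |y| |z| ^ (n - 1) ≤ |y - z| * n * |M| ^ (n - 1) := by gcongr
      _ = _ := by push_cast; rw [Real.norm_eq_abs, Real.dist_eq]; ring
  exact ((lipschitzWith_smul (erfRatio x ^ n)).comp_lipschitzOnWith hpow).sub
    (lipschitzWith_smul _).lipschitzOnWith

theorem exists_pos_le_reaction (hn : 2 ≤ n) (hy : lam n < y) :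
    ∃ q, 0 < q ∧ ∀ᶠ x in 𝓝 0, ∀ z, y ≤ z → q ≤ reaction n x z := by
  have hpos : 0 < reaction n 0 y := reaction_pos hn
    (pow_lt_pow_left₀ (xi0_pos hn) le_rfl two_ne_zero) (by rwa [c2Ext_zero hn])
  have hlim : Tendsto (fun x => reaction n x y) (𝓝 0) (𝓝 (reaction n 0 y)) :=
    ((continuous_reaction n).comp (Continuous.prodMk_left y)).tendsto 0
  refine ⟨reaction n 0 y / 2, half_pos hpos, ?_⟩
  filter_upwards [hlim.eventually_const_lt (half_lt_self hpos)] with x hx z hz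
  have hy0 := (lam_pos hn).trans hy
  have hmono := (strictMonoOn_reaction_div hn x).monotoneOn hy0 (hy0.trans_le hz) hz
  have h0 := div_pos ((half_pos hpos).trans hx) hy0
  calc reaction n 0 y / 2 ≤ reaction n x y / y * y := by rw [div_mul_cancel₀ _ hy0.ne']; exact hx.le
    _ ≤ reaction n x z / z * z := mul_le_mul hmono hz hy0.le (h0.trans_le hmono).le
    _ = _ := div_mul_cancel₀ _ (hy0.trans_le hz).ne'

end Reaction

section ShootSol

variable {n : ℕ} {ξ ρ ρ₁ ρ₂ : ℝ} {m m₁ m₂ : ℝ → ℝ}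

theorem shootSol_ode_iff {x y d v : ℝ} (hn : n ≠ 1) (hx : x ≠ 0) :
    d + (x / 2 - 2 * del n / x) * v +
        (del n * (del n + 1) / x ^ 2 - (del n / 2 - eps n)) * y =
      1 / x ^ 2 * (2 * mu1 x * y / x) ^ n ↔
    d = (2 * del n / x - x / 2) * v + reaction n x y / x ^ 2 := by
  rw [del_half_sub_eps hn, reaction, mul_div_right_comm (2 * mu1 x), ← erfRatio_eq hx, mul_pow]
  field_simp
  constructor <;> intro h <;> linear_combination h

theorem isShootSol_iff (hn : n ≠ 1) (hξ : 0 < ξ) : IsShootSol n ξ ρ m ↔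
    (∃ r, IsPositiveSolution (fun x => 2 * del n / x - x / 2) (fun x y => reaction n x y / x ^ 2)
      0 ξ m r) ∧ m ξ = ρ ∧ Tendsto m (𝓝[>] 0) (𝓝 (lam n)) := by
  have hs := uniqueDiffOn_Ioc (0 : ℝ) ξ
  have hmem : ξ ∈ Ioc 0 ξ := right_mem_Ioc.2 hξ
  constructor
  · rintro ⟨hC2, heq, hρ, hr, hpos, hlim⟩
    obtain ⟨hdiff, -, hC1⟩ := (contDiffOn_succ_iff_derivWithin (n := 1) hs).1 hC2
    have hr' := fun x hx => (hC1.differentiableOn one_ne_zero x hx).hasDerivWithinAt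
    exact ⟨⟨_, fun x hx => (hdiff x hx).hasDerivWithinAt, fun x hx =>
      (hr' x hx).congr_deriv ((shootSol_ode_iff hn hx.1.ne').1 (heq x hx)), hpos, hr⟩, hρ, hlim⟩
  · rintro ⟨⟨r, hr⟩, hρ, hlim⟩
    have hderiv : EqOn (derivWithin m (Ioc 0 ξ)) r (Ioc 0 ξ) := fun x hx =>
      (hr.hasDerivWithinAt x hx).derivWithin (hs x hx)
    refine ⟨hr.contDiffOn ?_ ?_, fun x hx => (shootSol_ode_iff hn hx.1.ne').2 ?_, hρ,
      (hderiv hmem).trans hr.deriv_right_eq_zero, hr.pos, hlim⟩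
    · exact (continuousOn_const.div continuousOn_id fun x hx => hx.1.ne').sub
        (continuousOn_id.div_const 2)
    · exact (continuous_reaction n).continuousOn.div (continuousOn_fst.pow 2)
        fun p hp => pow_ne_zero 2 hp.1.1.ne'
    · rw [derivWithin_congr hderiv (hderiv hx), hderiv hx]
      exact (hr.hasDerivWithinAt_deriv x hx).derivWithin (hs x hx)

theorem IsShootSol.eq (hn : 2 ≤ n) (hξ : 0 < ξ) (h₁ : IsShootSol n ξ ρ₁ m₁)
    (h₂ : IsShootSol n ξ ρ₂ m₂) : ρ₁ = ρ₂ := by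
  obtain ⟨⟨_, hsol₁⟩, rfl, hlim₁⟩ := (isShootSol_iff (by lia) hξ).1 h₁
  obtain ⟨⟨_, hsol₂⟩, rfl, hlim₂⟩ := (isShootSol_iff (by lia) hξ).1 h₂
  refine IsPositiveSolution.right_eq_of_tendsto (fun x hx y₁ hy₁ y₂ hy₂ hlt => ?_) hsol₁ hsol₂ hξ
    (lam_pos hn).ne' hlim₁ hlim₂
  simp only [div_right_comm _ (x ^ 2)]
  exact div_lt_div_of_pos_right (strictMonoOn_reaction_div hn x hy₁ hy₂ hlt) (pow_pos hx.1 2)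

end ShootSol

namespace IsCritical

variable {n : ℕ} {ξ ξm c : ℝ}

theorem exp_mem_Ioo {t : ℝ} (h : IsCritical n ξm) (ht : t < Real.log ξm) :
    Real.exp t ∈ Ioo 0 ξm :=
  ⟨Real.exp_pos t, (Real.lt_log_iff_exp_lt h.mem_Ioo.1).1 ht⟩

theorem lam_lt_c2Ext_right (h : IsCritical n ξm) : lam n < c2Ext n ξm :=
  h.lam_lt_c2Ext (right_mem_Ioc.2 h.mem_Ioo.1)

/-- The reaction term in the variable `t = log x`. Its argument is clamped to `[λ, c₂(ξm)]`, which
makes it globally Lipschitz and does not affect trapped solutions. -/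
noncomputable def force (h : IsCritical n ξm) (t y : ℝ) : ℝ :=
  reaction n (Real.exp t) (projIcc (lam n) (c2Ext n ξm) h.lam_lt_c2Ext_right.le y)

theorem continuous_force (h : IsCritical n ξm) : Continuous (Function.uncurry h.force) := by
  have : Continuous (projIcc (lam n) (c2Ext n ξm) h.lam_lt_c2Ext_right.le) :=
    continuous_projIcc
  exact (continuous_reaction n).comp (f := fun p : ℝ × ℝ =>
    (Real.exp p.1, (projIcc (lam n) (c2Ext n ξm) h.lam_lt_c2Ext_right.le p.2 : ℝ))) (by fun_prop)

theorem force_eq_reaction {t y : ℝ} (h : IsCritical n ξm)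
    (hy : y ∈ Icc (lam n) (c2Ext n ξm)) : h.force t y = reaction n (Real.exp t) y := by
  rw [force, projIcc_of_mem _ hy]

theorem force_pos {t y : ℝ} (h : IsCritical n ξm) (ht : t < Real.log ξm)
    (hy : c2Ext n (Real.exp t) < y) : 0 < h.force t y := by
  have hexp := Ioo_subset_Icc_self (h.exp_mem_Ioo ht)
  have hlt : c2Ext n (Real.exp t) < c2Ext n ξm :=
    h.strictMonoOn_c2Ext hexp (right_mem_Icc.2 h.mem_Ioo.1.le) (h.exp_mem_Ioo ht).2
  exact reaction_pos h.two_le (h.sq_lt_xi0_sq hexp) (lt_max_of_lt_right (lt_min hlt hy))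

theorem force_neg {t y : ℝ} (h : IsCritical n ξm) (ht : t < Real.log ξm)
    (hy : y < c2Ext n (Real.exp t)) : h.force t y < 0 := by
  have hexp := h.exp_mem_Ioo ht
  exact reaction_neg h.two_le (h.sq_lt_xi0_sq (Ioo_subset_Icc_self hexp))
    ((lam_pos h.two_le).trans_le (projIcc ..).2.1)
    (max_lt (h.lam_lt_c2Ext (Ioo_subset_Ioc_self hexp)) (min_lt_of_right_lt hy))

theorem exists_pos_le_force {y : ℝ} (h : IsCritical n ξm) (hy : lam n < y) :
    ∃ q, 0 < q ∧ ∀ᶠ t in atBot, ∀ z, y ≤ z → q ≤ h.force t z := by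
  have hclamp : lam n < projIcc (lam n) (c2Ext n ξm) h.lam_lt_c2Ext_right.le y :=
    lt_max_of_lt_right (lt_min h.lam_lt_c2Ext_right hy)
  obtain ⟨q, hq, hreaction⟩ := exists_pos_le_reaction h.two_le hclamp
  exact ⟨q, hq, (Real.tendsto_exp_atBot.eventually hreaction).mono fun t ht z hz =>
    ht _ (monotone_projIcc h.lam_lt_c2Ext_right.le hz)⟩

/-- The shooting problem for `m` in the variable `t = log x`. -/
noncomputable def shootingProblem (h : IsCritical n ξm) : ShootingProblem where
  endTime := Real.log ξm
  target := lam n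
  drift t := 1 + 2 * del n - Real.exp t ^ 2 / 2
  force := h.force
  nullcline t := c2Ext n (Real.exp t)
  lipConst t := (‖erfRatio (Real.exp t) ^ n‖₊ * (n * ‖c2Ext n ξm‖₊ ^ (n - 1)) +
    ‖del n * (del n + 1) - n * eps n / 2 * Real.exp t ^ 2‖₊) * 1
  continuous_drift := by fun_prop
  continuous_force := h.continuous_force
  continuous_lipConst := by
    have := continuous_erfRatio
    fun_prop
  lipschitzWith_force t :=
    (lipschitzOnWith_reaction n _ (lam_pos h.two_le).le).to_restrict.comp (LipschitzWith.projIcc _)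
  drift_nonneg t ht := by
    have hexp := h.exp_mem_Ioo ht
    have hsq : Real.exp t ^ 2 ≤ ξm ^ 2 := pow_le_pow_left₀ hexp.1.le hexp.2.le 2
    linarith [h.sq_half_le]
  force_pos t ht y hy := h.force_pos ht hy
  force_neg t ht y hy := h.force_neg ht hy
  target_lt_nullcline t ht := h.lam_lt_c2Ext (Ioo_subset_Ioc_self (h.exp_mem_Ioo ht))
  hasDerivAt_nullcline t ht := by
    obtain ⟨d, hd, hderiv⟩ := h.exists_pos_hasDerivAt_c2Ext (h.exp_mem_Ioo ht)
    exact ⟨d * Real.exp t, mul_pos hd (Real.exp_pos t), hderiv.comp t (Real.hasDerivAt_exp t)⟩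
  exists_le_force y hy := h.exists_pos_le_force hy

theorem isShootSol_of_trapped (h : IsCritical n ξm) (hξ : ξ ∈ Ioo 0 ξm)
    (hc : h.shootingProblem.Trapped (Real.log ξ) c) :
    IsShootSol n ξ c fun x => h.shootingProblem.pos (Real.log ξ) c (Real.log x) := by
  have hend : Real.log ξ < h.shootingProblem.endTime := Real.log_lt_log hξ.1 hξ.2
  have hmem {x : ℝ} (hx : x ∈ Ioc 0 ξ) :
      h.shootingProblem.pos (Real.log ξ) c (Real.log x) ∈ Icc (lam n) (c2Ext n ξm) := by
    have hbounds := hc.pos_mem_Icc hend (Real.log_le_log hx.1 hx.2)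
    refine ⟨hbounds.1, hbounds.2.trans ?_⟩
    have := h.strictMonoOn_c2Ext (Ioo_subset_Icc_self hξ) (right_mem_Icc.2 h.mem_Ioo.1.le) hξ.2
    simpa [shootingProblem, Real.exp_log hξ.1] using this.le
  refine (isShootSol_iff (by linarith [h.two_le] : 1 < n).ne' hξ.1).2 ⟨⟨fun x =>
    h.shootingProblem.vel (Real.log ξ) c (Real.log x) * x⁻¹, fun x hx => ?_, fun x hx => ?_,
    fun x hx => (lam_pos h.two_le).trans_le (hmem hx).1, by simp⟩, by simp,
    (hc.tendsto_pos hend).comp Real.tendsto_log_nhdsGT_zero⟩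
  · exact ((h.shootingProblem.hasDerivAt_pos _ c _).comp x
      (Real.hasDerivAt_log hx.1.ne')).hasDerivWithinAt
  · have hvel := (h.shootingProblem.hasDerivAt_vel (Real.log ξ) c _).comp x
      (Real.hasDerivAt_log hx.1.ne')
    have hdrift : h.shootingProblem.drift (Real.log x) = 1 + 2 * del n - x ^ 2 / 2 := by
      simp only [shootingProblem, Real.exp_log hx.1]
    have hforce : h.shootingProblem.force (Real.log x)
        (h.shootingProblem.pos (Real.log ξ) c (Real.log x)) = reaction n x _ :=
      (h.force_eq_reaction (hmem hx)).trans (by rw [Real.exp_log hx.1])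
    have hx0 := hx.1.ne'
    refine ((hvel.fun_mul (hasDerivAt_inv hx0)).congr_deriv ?_).hasDerivWithinAt
    rw [hdrift, hforce, Function.comp_apply]
    field_simp
    ring

end IsCritical

theorem shooting_towards_zero_general (n : ℕ) (hn : 2 ≤ n)
    (ξm : ℝ) (hξm : ξm ∈ Set.Ioo 0 (xi0 n))
    (hchar : deriv (om1 n) ξm * c2 n ξm ^ (n - 1) + deriv (om2 n) ξm = 0) :
    ∃ c0 : ℝ → ℝ, ContinuousOn c0 (Set.Ioo 0 ξm) ∧
      ∀ ξ ∈ Set.Ioo (0 : ℝ) ξm, lam n < c0 ξ ∧ c0 ξ < c2 n ξ ∧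
        ∀ ρ : ℝ, (∃ m : ℝ → ℝ, IsShootSol n ξ ρ m) ↔ ρ = c0 ξ := by
  have h : IsCritical n ξm := .of_deriv_om hn hξm hchar
  obtain ⟨c₀, hcont, htrapped⟩ := h.shootingProblem.exists_continuousOn_trapped_iff
    fun t ht c₁ c₂ h₁ h₂ => by
      have hξ := h.exp_mem_Ioo ht
      rw [← Real.log_exp t] at h₁ h₂
      exact (h.isShootSol_of_trapped hξ h₁).eq hn hξ.1 (h.isShootSol_of_trapped hξ h₂)
  refine ⟨fun ξ => c₀ (Real.log ξ), hcont.comp (Real.continuousOn_log.mono fun ξ hξ => hξ.1.ne')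
    fun ξ hξ => Real.log_lt_log hξ.1 hξ.2, fun ξ hξ => ?_⟩
  have hend : Real.log ξ < h.shootingProblem.endTime := Real.log_lt_log hξ.1 hξ.2
  have hc₀ := (htrapped _ hend _).2 rfl
  have hsol := h.isShootSol_of_trapped hξ hc₀
  have hlt : c₀ (Real.log ξ) < c2Ext n (Real.exp (Real.log ξ)) := hc₀.lt_nullcline hend
  rw [Real.exp_log hξ.1, c2Ext_of_ne_zero hξ.1.ne'] at hlt
  exact ⟨hc₀.target_lt, hlt, fun ρ =>
    ⟨fun ⟨_, hρ⟩ => hρ.eq hn hξ.1 hsol, by rintro rfl; exact ⟨_, hsol⟩⟩⟩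

/-- First shooting argument: for every ξ ∈ (0, ξ_m) there is a unique
c₀(ξ) ∈ (λ, c₂(ξ)) such that the solution with data (ξ, c₀(ξ)) is positive on (0,ξ]
and tends to λ at 0⁺; moreover ξ ↦ c₀(ξ) is continuous. -/
theorem shooting_towards_zero (n : ℕ) (hn : 4 ≤ n)
    (ξm : ℝ) (hξm : ξm ∈ Set.Ioo 0 (xi0 n))
    (hchar : deriv (om1 n) ξm * c2 n ξm ^ (n - 1) + deriv (om2 n) ξm = 0) :
    ∃ c0 : ℝ → ℝ, ContinuousOn c0 (Set.Ioo 0 ξm) ∧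
      ∀ ξ ∈ Set.Ioo (0:ℝ) ξm,
        (lam n < c0 ξ ∧ c0 ξ < c2 n ξ ∧ ∃ m : ℝ → ℝ, IsShootSol n ξ (c0 ξ) m) ∧
        (∀ ρ : ℝ, lam n < ρ → ρ < c2 n ξ → (∃ m : ℝ → ℝ, IsShootSol n ξ ρ m) →
          ρ = c0 ξ) := by
  obtain ⟨c0, hcont, h⟩ := shooting_towards_zero_general n (by lia) ξm hξm hchar
  exact ⟨c0, hcont, fun ξ hξ => ⟨⟨(h ξ hξ).1, (h ξ hξ).2.1, ((h ξ hξ).2.2 _).2 rfl⟩,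
    fun ρ _ _ => ((h ξ hξ).2.2 ρ).1⟩⟩
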